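/- Let m and d be integers with m ≥ 2 and d ≥ 2, and let G = {1,…,m}^d be the d-dimensional grid equipped with the ℓ1 metric (the shortest-path metric of the grid graph). There exists a universal constant c > 0 (independent of m and d) such that: for every C ≥ 1 and every map F : TC(G) → L_1 with bi-Lipschitz distortion at most C, one has C ≥ c·d·log m. -/

import Mathlib

open MeasureTheory Finset

noncomputable section

/-- Points of the grid `{1,…,m}^d` (coordinates taken 0-based). -/
abbrev GPt (m d : ℕ) := Fin d → Fin m

/-- The ℓ1 metric on the grid `{1,…,m}^d` (the shortest-path metric of the grid graph). -/
def gdistM {m d : ℕ} (u v : GPt m d) : ℝ := ∑ i, |((u i : ℕ) : ℝ) - ((v i : ℕ) : ℝ)|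

/-- The transportation cost norm on signed measures of total mass `0` on the grid,
via Kantorovich duality. -/
def tcNormG (m d : ℕ) (μ : GPt m d → ℝ) : ℝ :=
  sSup {r : ℝ | ∃ f : GPt m d → ℝ,
    (∀ u v, |f u - f v| ≤ gdistM u v) ∧ r = |∑ x, f x * μ x|}

/-- The Lebesgue space `L_1(0,1)`. -/
abbrev L1Space : Type := Lp ℝ 1 (volume.restrict (Set.Ioo (0:ℝ) 1))

/-- Successor in `Fin m`, truncated at the last element. -/
def nxt {m : ℕ} (a : Fin m) : Fin m := if h : a.1 + 1 < m then ⟨a.1 + 1, h⟩ else a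

/-- Total variation (ℓ1 norm of the gradient) of a function on the grid. -/
def gB {m d : ℕ} (h : GPt m d → ℝ) : ℝ :=
  ∑ i, ∑ x, |h (Function.update x i (nxt (x i))) - h x|

lemma gB_nonneg {m d : ℕ} (h : GPt m d → ℝ) : 0 ≤ gB h :=
  Finset.sum_nonneg fun _ _ => Finset.sum_nonneg fun _ _ => abs_nonneg _

lemma sum_cons {m d : ℕ} (h : GPt m (d+1) → ℝ) :
    ∑ x, h x = ∑ t : Fin m, ∑ x : GPt m d, h (Fin.cons t x) := by
  rw [← Fintype.sum_prod_type' (f := fun (t : Fin m) (x : GPt m d) => h (Fin.cons t x))]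
  symm
  apply Fintype.sum_equiv (Fin.consEquiv (fun _ => Fin m))
  intro x
  rfl

lemma gB_cons {m d : ℕ} (h : GPt m (d+1) → ℝ) :
    gB h = (∑ x : GPt m d, ∑ t : Fin m,
      |h (Fin.cons (nxt t) x) - h (Fin.cons t x)|) +
      ∑ t : Fin m, gB (fun x : GPt m d => h (Fin.cons t x)) := by
  unfold gB
  rw [Fin.sum_univ_succ]
  congr 1
  · rw [sum_cons, Finset.sum_comm]
    simp only [Fin.update_cons_zero, Fin.cons_zero]
  · rw [Finset.sum_comm (s := (univ : Finset (Fin m)))]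
    refine Finset.sum_congr rfl fun i _ => ?_
    rw [sum_cons]
    simp only [← Fin.cons_update, Fin.cons_succ]

/-- one dimensional variation bound -/
lemma line_var {m : ℕ} (g : Fin m → ℝ) (a b : Fin m) :
    |g a - g b| ≤ ∑ c, |g (nxt c) - g c| := by
  wlog hab : a.1 ≤ b.1 generalizing a b
  · rw [abs_sub_comm]; exact this b a (by omega)
  let G : ℕ → ℝ := fun k => if h : k < m then g ⟨k, h⟩ else 0
  have hm : ∀ k (hk : k < m), G k = g ⟨k, hk⟩ := fun k hk => by simp [G, hk]
  have h1 : G b.1 - G a.1 = ∑ k ∈ Finset.Ico a.1 b.1, (G (k+1) - G k) := by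
    rw [Finset.sum_Ico_sub]; exact hab
  have h2 : |g a - g b| ≤ ∑ k ∈ Finset.Ico a.1 b.1, |G (k+1) - G k| := by
    rw [abs_sub_comm]
    have := Finset.abs_sum_le_sum_abs (fun k => G (k+1) - G k) (Finset.Ico a.1 b.1)
    rw [← h1, hm _ b.2, hm _ a.2] at this
    exact this
  refine h2.trans ?_
  have h3 : ∑ k ∈ Finset.Ico a.1 b.1, |G (k+1) - G k| =
      ∑ k ∈ Finset.Ico a.1 b.1, (if h : k < m then |g (nxt ⟨k, h⟩) - g ⟨k, h⟩| else 0) := by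
    refine Finset.sum_congr rfl fun k hk => ?_
    have hk := Finset.mem_Ico.mp hk
    have hb := b.2
    have h1 : k < m := by omega
    have h2 : k + 1 < m := by omega
    simp [G, h1, h2, nxt]
  rw [h3, Finset.sum_fin_eq_sum_range]
  refine Finset.sum_le_sum_of_subset_of_nonneg ?_ ?_
  · intro k hk
    have hk := Finset.mem_Ico.mp hk
    have hb := b.2
    exact Finset.mem_range.mpr (by omega)
  · intro k _ _
    split_ifs
    · exact abs_nonneg _
    · exact le_rfl

/-- ℓ1 Poincaré inequality on the grid. -/
lemma poincare {m d : ℕ} (h : GPt m d → ℝ) :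
    ∑ x, ∑ y, |h x - h y| ≤ m * (m:ℝ)^d * gB h := by
  induction d with
  | zero =>
    have : ∀ x y : GPt m 0, |h x - h y| = 0 := fun x y => by
      rw [Subsingleton.elim x y]; simp
    simp [this, gB]
  | succ d ih =>
    rw [gB_cons]
    have e1 : ∑ x, ∑ y, |h x - h y| = ∑ t : Fin m, ∑ x : GPt m d, ∑ t' : Fin m, ∑ x' : GPt m d,
        |h (Fin.cons t x) - h (Fin.cons t' x')| := by
      rw [sum_cons]
      refine Finset.sum_congr rfl fun t _ => Finset.sum_congr rfl fun x _ => ?_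
      rw [sum_cons]
    have e2 : ∑ x, ∑ y, |h x - h y| ≤
        (∑ t : Fin m, ∑ x : GPt m d, ∑ t' : Fin m, ∑ x' : GPt m d,
          |h (Fin.cons t x) - h (Fin.cons t' x)|) +
        ∑ t : Fin m, ∑ x : GPt m d, ∑ t' : Fin m, ∑ x' : GPt m d,
          |h (Fin.cons t' x) - h (Fin.cons t' x')| := by
      rw [e1]
      simp only [← Finset.sum_add_distrib]
      refine Finset.sum_le_sum fun t _ => Finset.sum_le_sum fun x _ =>
        Finset.sum_le_sum fun t' _ => Finset.sum_le_sum fun x' _ => ?_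
      exact abs_sub_le _ _ _
    refine e2.trans ?_
    rw [mul_add]
    refine add_le_add ?_ ?_
    · calc _ = ∑ x : GPt m d, ∑ t : Fin m, ∑ t' : Fin m,
            (m:ℝ)^d * |h (Fin.cons t x) - h (Fin.cons t' x)| := by
            rw [Finset.sum_comm]
            simp
        _ ≤ ∑ x : GPt m d, ∑ t : Fin m, ∑ t' : Fin m,
            (m:ℝ)^d * ∑ c : Fin m, |h (Fin.cons (nxt c) x) - h (Fin.cons c x)| := by
            refine Finset.sum_le_sum fun x _ => Finset.sum_le_sum fun t _ =>
              Finset.sum_le_sum fun t' _ => ?_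
            refine mul_le_mul_of_nonneg_left ?_ (by positivity)
            exact line_var (fun c => h (Fin.cons c x)) t t'
        _ = _ := by
            simp only [Finset.sum_const, Finset.card_univ, Fintype.card_fin, nsmul_eq_mul,
              ← Finset.mul_sum]
            ring
    · calc _ = m * ∑ t' : Fin m, ∑ x : GPt m d, ∑ x' : GPt m d,
            |h (Fin.cons t' x) - h (Fin.cons t' x')| := by
            simp only [Finset.sum_const, Finset.card_univ, Fintype.card_fin, nsmul_eq_mul]
            rw [Finset.sum_comm]
        _ ≤ m * ∑ t' : Fin m, (m * (m:ℝ)^d * gB (fun x : GPt m d => h (Fin.cons t' x))) := by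
            refine mul_le_mul_of_nonneg_left ?_ (by positivity)
            exact Finset.sum_le_sum fun t' _ => ih _
        _ = _ := by
            rw [← Finset.mul_sum]; ring

lemma isop_aux {m d : ℕ} (hm : 0 < m) (τ : ℝ) (h : GPt m d → ℝ)
    (h01 : ∀ x, h x = 0 ∨ h x = 1) :
    d * ((1 + τ) * Real.exp (-τ) - 1 / m) * (∑ x, h x) ≤
      gB h + Real.exp (-τ) * ((∑ x, h x) * Real.log (∑ x, h x)) := by
  induction d with
  | zero =>
    have : gB h = 0 := by simp [gB]
    rw [this]
    simp only [Finset.univ_unique, Finset.sum_singleton]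
    rcases h01 default with h0 | h0 <;> simp [h0]
  | succ d ih =>
    have hne : Nonempty (Fin m) := ⟨⟨0, hm⟩⟩
    have hm' : (0:ℝ) < m := by exact_mod_cast hm
    rw [gB_cons]
    set a : Fin m → ℝ := fun t => ∑ x : GPt m d, h (Fin.cons t x) with ha
    have hsum : ∑ x, h x = ∑ t, a t := sum_cons h
    rw [hsum]
    have hnn : ∀ x, 0 ≤ h x := fun x => by rcases h01 x with h | h <;> simp [h]
    have ha0 : ∀ t, 0 ≤ a t := fun t => Finset.sum_nonneg fun x _ => hnn _
    obtain ⟨t0, ht0⟩ := Finite.exists_max a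
    set A := ∑ t, a t with hA
    have hA0 : 0 ≤ A := Finset.sum_nonneg fun t _ => ha0 t
    set e := Real.exp (-τ) with he
    have he0 : 0 < e := Real.exp_pos _
    have IH : ∀ t, d * ((1 + τ) * e - 1 / m) * a t ≤
        gB (fun x : GPt m d => h (Fin.cons t x)) + e * (a t * Real.log (a t)) :=
      fun t => ih (fun x => h (Fin.cons t x)) (fun x => h01 _)
    have IHs : d * ((1 + τ) * e - 1 / m) * A ≤
        (∑ t, gB (fun x : GPt m d => h (Fin.cons t x))) + e * ∑ t, (a t * Real.log (a t)) := by
      have := Finset.sum_le_sum (fun t (_ : t ∈ (univ : Finset (Fin m))) => IH t)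
      rwa [← Finset.mul_sum, Finset.sum_add_distrib, ← Finset.mul_sum] at this
    have hB0 : a t0 - A / m ≤ ∑ x : GPt m d, ∑ t : Fin m,
        |h (Fin.cons (nxt t) x) - h (Fin.cons t x)| := by
      have e1 : a t0 - A / m = ∑ x : GPt m d, (1 / m : ℝ) * ∑ t : Fin m,
          (h (Fin.cons t0 x) - h (Fin.cons t x)) := by
        rw [← Finset.mul_sum]
        simp only [Finset.sum_sub_distrib, Finset.sum_const, Finset.card_univ, Fintype.card_fin,
          nsmul_eq_mul]
        rw [Finset.sum_comm, ← Finset.mul_sum]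
        field_simp
        rw [mul_comm]
      rw [e1]
      refine Finset.sum_le_sum fun x _ => ?_
      rw [one_div, inv_mul_le_iff₀ hm']
      calc _ ≤ ∑ t : Fin m, ∑ c, |h (Fin.cons (nxt c) x) - h (Fin.cons c x)| := by
            refine Finset.sum_le_sum fun t _ => ?_
            exact (le_abs_self _).trans (line_var (fun c => h (Fin.cons c x)) t0 t)
        _ = _ := by simp
    have hlog : ∑ t, (a t * Real.log (a t)) ≤ A * Real.log (a t0) := by
      rw [hA, Finset.sum_mul]
      refine Finset.sum_le_sum fun t _ => ?_
      rcases (ha0 t).eq_or_lt with h0 | h0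
      · rw [← h0]; simp
      · exact mul_le_mul_of_nonneg_left (Real.log_le_log h0 (ht0 t)) h0.le
    have hmain : (1 + τ) * e * A + e * (A * Real.log (a t0)) ≤ a t0 + e * (A * Real.log A) := by
      rcases hA0.eq_or_lt with h0 | h0
      · rw [← h0]; simp [ha0]
      · have hM : 0 < a t0 := by
          by_contra hcon
          have : A ≤ 0 := Finset.sum_nonpos fun t _ => (ht0 t).trans (not_lt.mp hcon)
          linarith
        have h1 := Real.log_le_sub_one_of_pos (x := a t0 * Real.exp τ / A)
          (by positivity)
        rw [Real.log_div (by positivity) (by positivity), Real.log_mul (by positivity)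
          (by positivity), Real.log_exp] at h1
        have h2 : e * A * (Real.log (a t0) + τ - Real.log A) ≤
          e * A * (a t0 * Real.exp τ / A - 1) := mul_le_mul_of_nonneg_left h1 (by positivity)
        have h3 : e * A * (a t0 * Real.exp τ / A - 1) = a t0 - e * A := by
          have : e * Real.exp τ = 1 := by rw [he, ← Real.exp_add]; simp
          field_simp
          linear_combination a t0 * this
        rw [h3] at h2
        linarith
    have hlog' := mul_le_mul_of_nonneg_left hlog he0.le
    push_cast
    have : A / m = 1 / m * A := by ring
    rw [this] at hB0
    linarith

/-- Isoperimetric inequality on the grid. -/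
lemma isop {m d : ℕ} (hm : 0 < m) (σ : ℝ) (hσ : 0 < σ) (h : GPt m d → ℝ)
    (h01 : ∀ x, h x = 0 ∨ h x = 1) (hcard : ∑ x, h x ≤ σ ^ d) :
    d * (∑ x, h x) * (1 / σ - 1 / m) ≤ gB h := by
  have h1 := isop_aux hm (Real.log σ) h h01
  rw [Real.exp_neg, Real.exp_log hσ] at h1
  set a := ∑ x, h x with ha
  have hnn : ∀ x, 0 ≤ h x := fun x => by rcases h01 x with h | h <;> simp [h]
  have ha0 : 0 ≤ a := Finset.sum_nonneg fun x _ => hnn x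
  rcases ha0.eq_or_lt with h0 | h0
  · rw [← h0]; simp [gB_nonneg]
  · have h2 : Real.log a ≤ d * Real.log σ := by
      rw [← Real.log_pow]; exact Real.log_le_log h0 hcard
    have h3 : σ⁻¹ * (a * Real.log a) ≤ σ⁻¹ * (a * (d * Real.log σ)) := by gcongr
    rw [one_div σ]
    linarith

section prob
variable {J W : Type*} [Fintype J] [DecidableEq J] [Fintype W]

lemma marg [Nonempty W] (φ : W → ℝ) (i : J) :
    (Fintype.card W : ℝ) * ∑ ω : J → W, φ (ω i) =
      (Fintype.card (J → W) : ℝ) * ∑ w, φ w := by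
  classical
  have h := Finset.prod_univ_sum (fun _ : J => (univ : Finset W))
    (fun (i' : J) (w : W) => if i' = i then φ w else 1)
  simp only [Finset.prod_ite_eq', Finset.mem_univ, if_true, Fintype.piFinset_univ] at h
  rw [← h, ← Finset.mul_prod_erase univ _ (Finset.mem_univ i)]
  have h2 : ∏ x ∈ univ.erase i, ∑ w : W, (if x = i then φ w else 1) =
      (Fintype.card W : ℝ) ^ (Fintype.card J - 1) := by
    rw [Finset.prod_congr rfl (g := fun _ => (Fintype.card W : ℝ))]
    · simp [Finset.card_erase_of_mem]
    · intro x hx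
      simp [Finset.ne_of_mem_erase hx]
  rw [h2]
  simp only [if_true, Fintype.card_fun]
  have : 0 < Fintype.card J := Fintype.card_pos_iff.mpr ⟨i⟩
  obtain ⟨k, hk⟩ : ∃ k, Fintype.card J = k + 1 := ⟨Fintype.card J - 1, by omega⟩
  rw [hk]; push_cast; ring_nf; try simp

lemma cross (φ ψ : W → ℝ) (hφ : ∑ w, φ w = 0) {i j : J} (hij : i ≠ j) :
    ∑ ω : J → W, φ (ω i) * ψ (ω j) = 0 := by
  classical
  have h := Finset.prod_univ_sum (fun _ : J => (univ : Finset W))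
    (fun (i' : J) (w : W) => (if i' = i then φ w else 1) * (if i' = j then ψ w else 1))
  simp only [Finset.prod_mul_distrib, Finset.prod_ite_eq', Finset.mem_univ, if_true,
    Fintype.piFinset_univ] at h
  rw [← h]
  apply Finset.prod_eq_zero (Finset.mem_univ i)
  simp [hij, hφ]

lemma var_sum [Nonempty W] (g : J → W → ℝ) (hg : ∀ i, ∑ w, g i w = 0) :
    (Fintype.card W : ℝ) * ∑ ω : J → W, (∑ i, g i (ω i)) ^ 2 =
      (Fintype.card (J → W) : ℝ) * ∑ i, ∑ w, g i w ^ 2 := by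
  have h1 : ∑ ω : J → W, (∑ i, g i (ω i)) ^ 2 = ∑ i, ∑ ω : J → W, (g i (ω i)) ^ 2 := by
    simp only [sq, Finset.sum_mul_sum]
    rw [Finset.sum_comm]
    refine Finset.sum_congr rfl fun i _ => ?_
    rw [Finset.sum_comm]
    rw [Finset.sum_eq_single i]
    · intro j _ hj
      exact cross (g i) (g j) (hg i) (Ne.symm hj)
    · simp
  rw [h1, Finset.mul_sum, Finset.mul_sum]
  refine Finset.sum_congr rfl fun i _ => ?_
  exact marg (fun w => g i w ^ 2) i

lemma mean_abs_le [Nonempty W] (g : J → W → ℝ) :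
    (Fintype.card (J → W) : ℝ)⁻¹ * ∑ ω : J → W, |∑ i, g i (ω i)| ≤
      (Fintype.card W : ℝ)⁻¹ * ∑ i, ∑ w, |g i w| := by
  have hW : (0:ℝ) < Fintype.card W := by exact_mod_cast Fintype.card_pos
  have hO : (0:ℝ) < Fintype.card (J → W) := by exact_mod_cast Fintype.card_pos
  have h1 : ∑ ω : J → W, |∑ i, g i (ω i)| ≤ ∑ i, ∑ ω : J → W, |g i (ω i)| := by
    rw [Finset.sum_comm]
    exact Finset.sum_le_sum fun ω _ => Finset.abs_sum_le_sum_abs _ _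
  have h2 : (Fintype.card W : ℝ) * ∑ i, ∑ ω : J → W, |g i (ω i)| =
      (Fintype.card (J → W) : ℝ) * ∑ i, ∑ w, |g i w| := by
    rw [Finset.mul_sum, Finset.mul_sum]
    exact Finset.sum_congr rfl fun i _ => marg (fun w => |g i w|) i
  rw [inv_mul_le_iff₀ hO]
  refine h1.trans (le_of_eq ?_)
  field_simp
  linarith

lemma mean_abs_sq_le [Nonempty W] (g : J → W → ℝ) (hg : ∀ i, ∑ w, g i w = 0) :
    ((Fintype.card (J → W) : ℝ)⁻¹ * ∑ ω : J → W, |∑ i, g i (ω i)|) ^ 2 ≤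
      (Fintype.card W : ℝ)⁻¹ * ∑ i, ∑ w, g i w ^ 2 := by
  have hW : (0:ℝ) < Fintype.card W := by exact_mod_cast Fintype.card_pos
  have hO : (0:ℝ) < Fintype.card (J → W) := by exact_mod_cast Fintype.card_pos
  have h1 := sq_sum_le_card_mul_sum_sq (s := (univ : Finset (J → W)))
    (f := fun ω => |∑ i, g i (ω i)|)
  simp only [sq_abs, Finset.card_univ] at h1
  have h2 := var_sum g hg
  rw [mul_pow]
  have h3 : (Fintype.card W : ℝ)⁻¹ * ∑ i, ∑ w, g i w ^ 2 =
      (Fintype.card (J → W) : ℝ)⁻¹ * ∑ ω : J → W, (∑ i, g i (ω i)) ^ 2 := by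
    field_simp; linarith
  rw [h3]
  calc _ ≤ (Fintype.card (J → W) : ℝ)⁻¹ ^ 2 * (Fintype.card (J → W) *
        ∑ ω : J → W, (∑ i, g i (ω i)) ^ 2) := by gcongr
    _ = _ := by field_simp
end prob

/-- Discrete coarea principle. -/
lemma coarea {X : Type*} [Fintype X] (P Q : (X → ℝ) → ℝ)
    (hP : ∀ (f h : X → ℝ) (c : ℝ), 0 ≤ c → P (fun x => f x + c * h x) ≤ P f + c * P h)
    (hQ : ∀ (f h : X → ℝ) (c : ℝ), 0 ≤ c →
      (∀ x y, |f x + c * h x - (f y + c * h y)| = |f x - f y| + c * |h x - h y|) →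
      Q (fun x => f x + c * h x) = Q f + c * Q h)
    (hc : ∀ f : X → ℝ, (∀ x y, f x = f y) → P f ≤ Q f)
    (h01 : ∀ h : X → ℝ, (∀ x, h x = 0 ∨ h x = 1) → P h ≤ Q h) (f : X → ℝ) : P f ≤ Q f := by
  classical
  induction hn : (univ.image f).card using Nat.strong_induction_on generalizing f with
  | _ n ih =>
    by_cases hcon : ∀ x y, f x = f y
    · exact hc f hcon
    · push Not at hcon
      obtain ⟨u, v, huv⟩ := hcon
      have hne : (univ.image f).Nonempty := ⟨f u, by simp⟩
      set S := univ.image f with hS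
      have hmem : ∀ x, f x ∈ S := fun x => by simp [hS]
      set M := S.max' hne with hM
      have hMS : M ∈ S := S.max'_mem hne
      have hne2 : (S.erase M).Nonempty := by
        by_cases h : f u = M
        · exact ⟨f v, by rw [Finset.mem_erase]; exact ⟨fun h' => huv (h.trans h'.symm), hmem v⟩⟩
        · exact ⟨f u, by rw [Finset.mem_erase]; exact ⟨h, hmem u⟩⟩
      set M2 := (S.erase M).max' hne2 with hM2
      have hM2S : M2 ∈ S.erase M := (S.erase M).max'_mem hne2
      have hM2lt : M2 < M :=
        lt_of_le_of_ne (S.le_max' _ (Finset.mem_of_mem_erase hM2S)) (Finset.ne_of_mem_erase hM2S)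
      have hle : ∀ x, f x ≠ M → f x ≤ M2 := fun x hx =>
        (S.erase M).le_max' _ (Finset.mem_erase.mpr ⟨hx, hmem x⟩)
      let f' : X → ℝ := fun x => if f x = M then M2 else f x
      let h : X → ℝ := fun x => if f x = M then 1 else 0
      have hf : f = fun x => f' x + (M - M2) * h x := by
        funext x
        by_cases hx : f x = M
        · simp [f', h, hx]
        · simp [f', h, hx]
      have hcard : (univ.image f').card < n := by
        rw [← hn]
        apply Finset.card_lt_card
        refine Finset.ssubset_of_subset_of_ssubset ?_ (Finset.erase_ssubset hMS)
        intro y hy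
        obtain ⟨x, _, rfl⟩ := Finset.mem_image.mp hy
        by_cases hx : f x = M
        · simp only [f', hx, if_true]; exact hM2S
        · simp only [f', hx, if_false]; exact Finset.mem_erase.mpr ⟨hx, hmem x⟩
      have h1 := ih _ hcard f' rfl
      have h2 : P h ≤ Q h := h01 h fun x => by by_cases hx : f x = M <;> simp [h, hx]
      have h3 := hP f' h (M - M2) (by linarith)
      have h4 := hQ f' h (M - M2) (by linarith) (by
        intro x y
        by_cases hx : f x = M <;> by_cases hy : f y = M
        · simp [f', h, hx, hy]
        · have := hle y hy
          simp only [f', h, hx, hy, if_true, if_false]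
          rw [abs_of_nonneg (by linarith), abs_of_nonneg (by linarith)]
          norm_num
        · have := hle x hx
          simp only [f', h, hx, hy, if_true, if_false]
          rw [abs_of_nonpos (by linarith), abs_of_nonpos (by linarith)]
          norm_num
        · simp [f', h, hx, hy])
      rw [← hf] at h3 h4
      rw [h4]
      have := mul_le_mul_of_nonneg_left h2 (show 0 ≤ M - M2 by linarith)
      linarith

/-- Two-sided geometric summation. -/
lemma geom_sum_min (k : ℕ) (u : ℝ) (hu : 0 < u) :
    ∑ j ∈ Finset.range k, min (1 / (u * 2 ^ j)) (Real.sqrt (u * 2 ^ j)) ≤ 6 := by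
  let ψ : ℝ → ℝ := fun u => if u < 1 then (5/2) * Real.sqrt u else 6 - 2 / u
  have hψ0 : ∀ u, 0 < u → 0 ≤ ψ u := by
    intro u hu
    by_cases h : u < 1
    · simp only [ψ, h, if_true]; positivity
    · simp only [ψ, h, if_false]
      have : 2 / u ≤ 2 := by rw [div_le_iff₀ hu]; linarith
      linarith
  have hψ6 : ∀ u, 0 < u → ψ u ≤ 6 := by
    intro u hu
    by_cases h : u < 1
    · simp only [ψ, h, if_true]
      have : Real.sqrt u ≤ 1 := Real.sqrt_le_one.mpr h.le
      linarith
    · simp only [ψ, h, if_false]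
      have : 0 < 2 / u := by positivity
      linarith
  have hstep : ∀ u, 0 < u → min (1 / u) (Real.sqrt u) ≤ ψ (u * 2) - ψ u := by
    intro u hu
    by_cases h : u < 1
    · have hs1 : Real.sqrt u ≤ 1 := Real.sqrt_le_one.mpr h.le
      have hs0 := Real.sqrt_nonneg u
      refine (min_le_right _ _).trans ?_
      by_cases h2 : u * 2 < 1
      · simp only [ψ, h, h2, if_true]
        rw [Real.sqrt_mul hu.le]
        have : (7/5 : ℝ) ≤ Real.sqrt 2 := Real.le_sqrt_of_sq_le (by norm_num)
        nlinarith
      · simp only [ψ, h, h2, if_true, if_false]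
        have : 2 / (u * 2) ≤ 2 := by rw [div_le_iff₀ (by positivity)]; linarith
        linarith
    · have h2 : ¬ (u * 2 < 1) := by linarith
      refine (min_le_left _ _).trans ?_
      simp only [ψ, h, h2, if_false]
      have e1 : 2 / (u * 2) = 1 / u := by field_simp
      have e2 : 2 / u = 2 * (1 / u) := by ring
      rw [e1, e2]
      linarith
  have hsum : ∑ j ∈ Finset.range k, min (1 / (u * 2 ^ j)) (Real.sqrt (u * 2 ^ j)) ≤
      ψ (u * 2 ^ k) - ψ u := by
    induction k with
    | zero => simp
    | succ k ih =>
      rw [Finset.sum_range_succ]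
      have := hstep (u * 2 ^ k) (by positivity)
      rw [pow_succ, ← mul_assoc]
      linarith
  have := hψ0 u hu
  have := hψ6 (u * 2 ^ k) (by positivity)
  linarith

/-- The point of the grid with block coordinates `b` and offset `w`. -/
def pt {m s M d : ℕ} (hm : M * s = m) (b : GPt M d) (w : GPt s d) : GPt m d :=
  fun i => ⟨b i * s + w i, by
    have h1 := (b i).2
    have h2 := (w i).2
    calc (b i : ℕ) * s + w i < (b i : ℕ) * s + s := by omega
      _ = ((b i : ℕ) + 1) * s := by ring
      _ ≤ M * s := Nat.mul_le_mul_right _ h1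
      _ = m := hm⟩

lemma pt_bij {m s M d : ℕ} (hm : M * s = m) :
    Function.Bijective (fun p : GPt M d × GPt s d => pt hm p.1 p.2) := by
  rw [Fintype.bijective_iff_injective_and_card]
  constructor
  · rintro ⟨b, w⟩ ⟨b', w'⟩ h
    have h' : ∀ i, (b i : ℕ) * s + w i = (b' i : ℕ) * s + w' i := fun i => by
      have := congrFun h i
      exact congrArg Fin.val this
    have hb : ∀ i, (b i : ℕ) = b' i := fun i => by
      have h1 : ((b i : ℕ) * s + w i) / s = b i := by
        have hs : 0 < s := lt_of_le_of_lt (Nat.zero_le _) (w i).2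
        rw [mul_comm, Nat.mul_add_div hs, Nat.div_eq_of_lt (w i).2, add_zero]
      have h2 : ((b' i : ℕ) * s + w' i) / s = b' i := by
        have hs : 0 < s := lt_of_le_of_lt (Nat.zero_le _) (w i).2
        rw [mul_comm, Nat.mul_add_div hs, Nat.div_eq_of_lt (w' i).2, add_zero]
      rw [← h1, ← h2, h' i]
    have hbb : b = b' := funext fun i => Fin.ext (hb i)
    have hww : w = w' := funext fun i => Fin.ext (by
      have h1 := h' i
      have h2 := hb i
      rw [h2] at h1
      omega)
    rw [hbb, hww]
  · simp [← hm, mul_pow]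

lemma sum_pt {m s M d : ℕ} (hm : M * s = m) (f : GPt m d → ℝ) :
    ∑ x, f x = ∑ b : GPt M d, ∑ w : GPt s d, f (pt hm b w) := by
  rw [← (pt_bij (d := d) hm).sum_comp f, Fintype.sum_prod_type]

lemma gB_block {m s M d : ℕ} (hm : M * s = m) (h : GPt m d → ℝ) :
    ∑ b : GPt M d, gB (fun w : GPt s d => h (pt hm b w)) ≤ gB h := by
  unfold gB
  rw [Finset.sum_comm]
  refine Finset.sum_le_sum fun i _ => ?_
  rw [sum_pt hm]
  refine Finset.sum_le_sum fun b _ => Finset.sum_le_sum fun w _ => ?_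
  by_cases hw : (w i).1 + 1 < s
  · have : pt hm b (Function.update w i (nxt (w i))) =
        Function.update (pt hm b w) i (nxt (pt hm b w i)) := by
      funext j
      by_cases hj : j = i
      · subst hj
        have h0 : nxt (w j) = ⟨(w j).1 + 1, hw⟩ := by simp [nxt, hw]
        have h1 : (pt hm b w j).1 + 1 < m := by
          have h2 := (pt hm b (Function.update w j ⟨(w j).1 + 1, hw⟩) j).2
          simp only [pt, Function.update_self] at h2
          exact h2
        have h3 : nxt (pt hm b w j) = ⟨(pt hm b w j).1 + 1, h1⟩ := by
          unfold nxt; rw [dif_pos h1]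
        rw [Function.update_self, h3, h0]
        apply Fin.ext
        simp only [pt, Function.update_self]
        rfl
      · simp [pt, hj]
    show |h (pt hm b (Function.update w i (nxt (w i)))) - _| ≤ _
    rw [this]
  · have : Function.update w i (nxt (w i)) = w := by
      simp [nxt, hw]
    rw [this]
    simp

/-- Random sampling measure: `n` points in every block of side `s`, minus uniform. -/
def smp {m s M d : ℕ} (hm : M * s = m) (n : ℕ) (ω : GPt M d × Fin n → GPt s d) :
    GPt m d → ℝ := fun x =>
  (s:ℝ)⁻¹ * (((n:ℝ) * (M:ℝ)^d)⁻¹ * (∑ p, if pt hm p.1 (ω p) = x then 1 else 0) - ((m:ℝ)^d)⁻¹)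

lemma smp_pair {m s M d : ℕ} (hm : M * s = m) (n : ℕ)
    (ω : GPt M d × Fin n → GPt s d) (f : GPt m d → ℝ) :
    ∑ x, f x * smp hm n ω x = (s:ℝ)⁻¹ * (((n:ℝ) * (M:ℝ)^d)⁻¹ * (∑ p, f (pt hm p.1 (ω p)))
      - ((m:ℝ)^d)⁻¹ * ∑ x, f x) := by
  unfold smp
  have h1 : ∑ p : GPt M d × Fin n, f (pt hm p.1 (ω p)) =
      ∑ x, f x * ∑ p, if pt hm p.1 (ω p) = x then 1 else 0 := by
    simp only [Finset.mul_sum]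
    rw [Finset.sum_comm]
    refine Finset.sum_congr rfl fun p _ => ?_
    simp
  rw [h1]
  simp only [Finset.mul_sum, mul_sub, Finset.sum_sub_distrib]
  congr 1
  · refine Finset.sum_congr rfl fun x _ => Finset.sum_congr rfl fun p _ => ?_
    ring
  · refine Finset.sum_congr rfl fun x _ => ?_
    ring

lemma smp_pair' {m s M d : ℕ} (hm : M * s = m) (hm0 : 0 < m) (n : ℕ) (hn : 0 < n)
    (ω : GPt M d × Fin n → GPt s d) (f : GPt m d → ℝ) :
    ∑ x, f x * smp hm n ω x = (s:ℝ)⁻¹ * ((n:ℝ) * (M:ℝ)^d)⁻¹ * (∑ p : GPt M d × Fin n,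
      (f (pt hm p.1 (ω p)) - ((s:ℝ)^d)⁻¹ * ∑ w, f (pt hm p.1 w))) := by
  have hs : 0 < s := Nat.pos_of_ne_zero fun h => by subst h; simp at hm; omega
  have hM : 0 < M := Nat.pos_of_ne_zero fun h => by subst h; simp at hm; omega
  have hs' : (0:ℝ) < s := by exact_mod_cast hs
  have hM' : (0:ℝ) < M := by exact_mod_cast hM
  have hn' : (0:ℝ) < n := by exact_mod_cast hn
  rw [smp_pair hm n, Finset.sum_sub_distrib]
  have h1 : ∑ p : GPt M d × Fin n, ((s:ℝ)^d)⁻¹ * ∑ w, f (pt hm p.1 w) =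
      n * ((s:ℝ)^d)⁻¹ * ∑ x, f x := by
    rw [Fintype.sum_prod_type, sum_pt hm]
    simp only [Finset.sum_const, Finset.card_univ, Fintype.card_fin, nsmul_eq_mul, Finset.mul_sum]
    refine Finset.sum_congr rfl fun x _ => Finset.sum_congr rfl fun p _ => ?_
    ring
  rw [h1]
  have hmr : (m:ℝ) = M * s := by rw [← hm]; push_cast; rfl
  rw [hmr, mul_pow]
  field_simp

lemma smp_sum_zero {m s M d : ℕ} (hm : M * s = m) (hm0 : 0 < m) (n : ℕ) (hn : 0 < n)
    (ω : GPt M d × Fin n → GPt s d) : ∑ x, smp hm n ω x = 0 := by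
  have hs : 0 < s := Nat.pos_of_ne_zero fun h => by subst h; simp at hm; omega
  have hs' : (0:ℝ) < s := by exact_mod_cast hs
  have h := smp_pair' hm hm0 n hn ω (fun _ => 1)
  simp only [one_mul] at h
  rw [h]
  have : ((s:ℝ)^d)⁻¹ * (s:ℝ)^d = 1 := by field_simp
  simp [this]

/-- average of the pairing of a function against the sampling measures at one scale -/
def Tm {m s M d : ℕ} (hm : M * s = m) (n : ℕ) (h : GPt m d → ℝ) : ℝ :=
  (Fintype.card (GPt M d × Fin n → GPt s d) : ℝ)⁻¹ *
    ∑ ω : GPt M d × Fin n → GPt s d, |∑ x, h x * smp hm n ω x|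

lemma Tm_bounds {m s M d : ℕ} (hm : M * s = m) (hm0 : 0 < m) (n : ℕ) (hn : 0 < n)
    (h : GPt m d → ℝ) (h01 : ∀ x, h x = 0 ∨ h x = 1) :
    Tm hm n h ≤ 2 * (∑ x, h x) / (s * (m:ℝ)^d) ∧
    s * (Tm hm n h)^2 ≤ (s:ℝ)^d * gB h / (n * ((m:ℝ)^d)^2) := by
  have hs : 0 < s := Nat.pos_of_ne_zero fun h => by subst h; simp at hm; omega
  have hM : 0 < M := Nat.pos_of_ne_zero fun h => by subst h; simp at hm; omega
  have hs' : (0:ℝ) < s := by exact_mod_cast hs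
  have hM' : (0:ℝ) < M := by exact_mod_cast hM
  have hn' : (0:ℝ) < n := by exact_mod_cast hn
  have hmr : (m:ℝ) = M * s := by rw [← hm]; push_cast; rfl
  have : Nonempty (Fin s) := ⟨⟨0, hs⟩⟩
  have hnn : ∀ x, 0 ≤ h x := fun x => by rcases h01 x with h | h <;> simp [h]
  have hle1 : ∀ x, h x ≤ 1 := fun x => by rcases h01 x with h | h <;> simp [h]
  let g : GPt M d × Fin n → GPt s d → ℝ := fun p w =>
    h (pt hm p.1 w) - ((s:ℝ)^d)⁻¹ * ∑ w, h (pt hm p.1 w)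
  have hTm : Tm hm n h = (s:ℝ)⁻¹ * ((n:ℝ) * (M:ℝ)^d)⁻¹ *
      ((Fintype.card (GPt M d × Fin n → GPt s d) : ℝ)⁻¹ *
        ∑ ω : GPt M d × Fin n → GPt s d, |∑ p, g p (ω p)|) := by
    unfold Tm
    simp only [smp_pair' hm hm0 n hn, abs_mul]
    rw [← Finset.mul_sum, abs_of_pos (show (0:ℝ) < (s:ℝ)⁻¹ by positivity),
      abs_of_pos (show (0:ℝ) < ((n:ℝ) * (M:ℝ)^d)⁻¹ by positivity)]
    ring
  have hcW : (Fintype.card (GPt s d) : ℝ) = (s:ℝ)^d := by simp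
  have hg0 : ∀ p, ∑ w, g p w = 0 := by
    intro p
    simp only [g, Finset.sum_sub_distrib, Finset.sum_const, Finset.card_univ, nsmul_eq_mul, hcW]
    field_simp
    ring
  have b1 := mean_abs_le g
  have b2 := mean_abs_sq_le g hg0
  rw [hcW] at b1 b2
  have hsumh : ∀ p : GPt M d × Fin n, 0 ≤ ∑ w, h (pt hm p.1 w) :=
    fun p => Finset.sum_nonneg fun w _ => hnn _
  constructor
  · have c1 : ∑ p, ∑ w, |g p w| ≤ 2 * n * ∑ x, h x := by
      have c2 : ∀ p, ∑ w, |g p w| ≤ 2 * ∑ w, h (pt hm p.1 w) := by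
        intro p
        calc ∑ w, |g p w| ≤ ∑ w, (h (pt hm p.1 w) + ((s:ℝ)^d)⁻¹ * ∑ w, h (pt hm p.1 w)) := by
              refine Finset.sum_le_sum fun w _ => ?_
              have h1 := hnn (pt hm p.1 w)
              have h2 : 0 ≤ ((s:ℝ)^d)⁻¹ * ∑ w, h (pt hm p.1 w) :=
                mul_nonneg (by positivity) (hsumh p)
              simp only [g]
              rw [abs_le]; constructor <;> linarith
          _ = _ := by
              simp only [Finset.sum_add_distrib, Finset.sum_const, Finset.card_univ,
                nsmul_eq_mul, hcW]
              field_simp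
              ring
      refine (Finset.sum_le_sum fun p _ => c2 p).trans (le_of_eq ?_)
      rw [← Finset.mul_sum, Fintype.sum_prod_type, sum_pt hm]
      simp only [Finset.sum_const, Finset.card_univ, Fintype.card_fin, nsmul_eq_mul,
        ← Finset.mul_sum]
      ring
    rw [hTm]
    calc _ ≤ (s:ℝ)⁻¹ * ((n:ℝ) * (M:ℝ)^d)⁻¹ * (((s:ℝ)^d)⁻¹ * (2 * n * ∑ x, h x)) := by
          refine mul_le_mul_of_nonneg_left ?_ (by positivity)
          refine b1.trans ?_
          exact mul_le_mul_of_nonneg_left c1 (by positivity)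
      _ = _ := by rw [hmr, mul_pow]; field_simp
  · have c1 : ∑ p, ∑ w, g p w ^ 2 ≤ n * (s * gB h) := by
      have c2 : ∀ p, ∑ w, g p w ^ 2 ≤ s * gB (fun w => h (pt hm p.1 w)) := by
        intro p
        have c3 : ∀ w, g p w ^ 2 ≤ ((s:ℝ)^d)⁻¹ * ∑ w', |h (pt hm p.1 w) - h (pt hm p.1 w')| := by
          intro w
          have e1 : g p w = ((s:ℝ)^d)⁻¹ * ∑ w', (h (pt hm p.1 w) - h (pt hm p.1 w')) := by
            simp only [g, Finset.sum_sub_distrib, Finset.sum_const, Finset.card_univ,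
              nsmul_eq_mul, hcW]
            field_simp
          have e2 : |g p w| ≤ ((s:ℝ)^d)⁻¹ * ∑ w', |h (pt hm p.1 w) - h (pt hm p.1 w')| := by
            rw [e1, abs_mul, abs_of_pos (show (0:ℝ) < ((s:ℝ)^d)⁻¹ by positivity)]
            exact mul_le_mul_of_nonneg_left (Finset.abs_sum_le_sum_abs _ _) (by positivity)
          have e3 : |g p w| ≤ 1 := by
            refine e2.trans ?_
            rw [inv_mul_le_iff₀ (by positivity), mul_one, ← hcW]
            calc _ ≤ ∑ w' : GPt s d, (1:ℝ) := by
                  refine Finset.sum_le_sum fun w' _ => ?_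
                  rw [abs_le]
                  constructor <;> linarith [hnn (pt hm p.1 w), hnn (pt hm p.1 w'),
                    hle1 (pt hm p.1 w), hle1 (pt hm p.1 w')]
              _ = _ := by simp
          rw [← sq_abs]
          nlinarith [abs_nonneg (g p w)]
        refine (Finset.sum_le_sum fun w _ => c3 w).trans ?_
        rw [← Finset.mul_sum, inv_mul_le_iff₀ (by positivity)]
        refine (poincare (fun w => h (pt hm p.1 w))).trans (le_of_eq ?_)
        ring
      refine (Finset.sum_le_sum fun p _ => c2 p).trans ?_
      rw [← Finset.mul_sum, Fintype.sum_prod_type]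
      simp only [Finset.sum_const, Finset.card_univ, Fintype.card_fin, nsmul_eq_mul,
        ← Finset.mul_sum]
      have := gB_block hm h
      calc _ = (n:ℝ) * (s * ∑ b : GPt M d, gB (fun w : GPt s d => h (pt hm b w))) := by ring
        _ ≤ _ := by gcongr
    rw [hTm, mul_pow]
    calc _ ≤ s * (((s:ℝ)⁻¹ * ((n:ℝ) * (M:ℝ)^d)⁻¹)^2 * (((s:ℝ)^d)⁻¹ * (n * (s * gB h)))) := by
          refine mul_le_mul_of_nonneg_left ?_ (by positivity)
          refine mul_le_mul_of_nonneg_left ?_ (by positivity)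
          refine b2.trans ?_
          exact mul_le_mul_of_nonneg_left c1 (by positivity)
      _ = _ := by rw [hmr, mul_pow]; field_simp; ring

lemma Tm_nonneg {m s M d : ℕ} (hm : M * s = m) (n : ℕ) (h : GPt m d → ℝ) : 0 ≤ Tm hm n h :=
  mul_nonneg (by positivity) (Finset.sum_nonneg fun _ _ => abs_nonneg _)

lemma hscale {k : ℕ} (j : Fin k) : 2 ^ (k - (j.1 + 1)) * 2 ^ (j.1 + 1) = 2 ^ k := by
  rw [← pow_add]; congr 1; have := j.2; omega

lemma card_bound (d n : ℕ) (hd : 2 ≤ d) (hn : n = ⌊((11:ℝ)/10)^d⌋₊) :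
    1 ≤ n ∧ (n:ℝ) ≤ ((11:ℝ)/10)^d ∧ (d:ℝ)^2 * ((21:ℝ)/20)^d ≤ 5000 * n := by
  have h1 : (1:ℝ) ≤ ((11:ℝ)/10)^d := one_le_pow₀ (by norm_num)
  have hn1 : 1 ≤ n := by rw [hn]; exact Nat.le_floor (by simpa using h1)
  have h2 : (n:ℝ) ≤ ((11:ℝ)/10)^d := by rw [hn]; exact Nat.floor_le (by positivity)
  have h3 : ((11:ℝ)/10)^d < n + 1 := by rw [hn]; exact Nat.lt_floor_add_one _
  have hn1' : (1:ℝ) ≤ n := by exact_mod_cast hn1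
  refine ⟨hn1, h2, ?_⟩
  have h4 : (1:ℝ) + d * (1/50) ≤ (1 + 1/50)^d := one_add_mul_le_pow (by norm_num) d
  have h5 : (d:ℝ)/50 ≤ (51/50:ℝ)^d := by
    have : (1 + 1/50 : ℝ) = 51/50 := by norm_num
    rw [this] at h4; linarith
  have h6 : ((d:ℝ)/50)^2 ≤ ((51/50:ℝ)^d)^2 := by gcongr
  have h7 : ((51/50:ℝ)^d)^2 ≤ (22/21:ℝ)^d := by
    rw [← pow_mul, mul_comm, pow_mul]
    gcongr; norm_num
  have h8 : ((11:ℝ)/10)^d = ((21:ℝ)/20)^d * (22/21:ℝ)^d := by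
    rw [← mul_pow]; norm_num
  have h9 : ((21:ℝ)/20)^d * ((d:ℝ)/50)^2 ≤ ((11:ℝ)/10)^d := by
    rw [h8]; gcongr; exact h6.trans h7
  have h10 : ((21:ℝ)/20)^d * ((d:ℝ)/50)^2 = ((d:ℝ)^2 * ((21:ℝ)/20)^d) / 2500 := by ring
  rw [h10] at h9
  linarith

/-- Pointwise bound leading to summation over scales. -/
lemma scale_arith (T K u : ℝ) (hK : 0 ≤ K) (hu : 0 < u) (h1 : T ≤ K * (1 / u))
    (h2 : u ≤ 1 → T ^ 2 ≤ K ^ 2 * u) : T ≤ K * min (1 / u) (Real.sqrt u) := by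
  rw [mul_min_of_nonneg _ _ hK]
  refine le_min h1 ?_
  by_cases h : u ≤ 1
  · have h3 := h2 h
    have : K * Real.sqrt u = Real.sqrt (K ^ 2 * u) := by
      rw [Real.sqrt_mul (by positivity), Real.sqrt_sq hK]
    rw [this]
    exact Real.le_sqrt_of_sq_le h3
  · push Not at h
    refine h1.trans ?_
    refine mul_le_mul_of_nonneg_left ?_ hK
    have a1 : 1 / u ≤ 1 := by rw [div_le_one hu]; exact h.le
    have a2 : 1 ≤ Real.sqrt u := Real.one_le_sqrt.mpr h.le
    linarith

lemma gB_compl {m d : ℕ} (h : GPt m d → ℝ) : gB (fun x => 1 - h x) = gB h := by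
  unfold gB
  refine Finset.sum_congr rfl fun i _ => Finset.sum_congr rfl fun x _ => ?_
  rw [abs_sub_comm]; congr 1; ring

lemma Tm_compl {m s M d : ℕ} (hm : M * s = m) (hm0 : 0 < m) (n : ℕ) (hn : 0 < n)
    (h : GPt m d → ℝ) : Tm hm n (fun x => 1 - h x) = Tm hm n h := by
  unfold Tm
  congr 1
  refine Finset.sum_congr rfl fun ω _ => ?_
  simp only [sub_mul, one_mul, Finset.sum_sub_distrib, smp_sum_zero hm hm0 n hn]
  simp

lemma sobolev_half {k d n : ℕ} (hd : 2 ≤ d) (hn : 1 ≤ n)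
    (hnb : (d:ℝ)^2 * ((21:ℝ)/20)^d ≤ 5000 * n)
    (h : GPt (2^k) d → ℝ) (h01 : ∀ x, h x = 0 ∨ h x = 1)
    (hhalf : ∑ x, h x ≤ (((2^k : ℕ) : ℝ)^d) / 2) :
    ∑ j : Fin k, Tm (hscale j) n h ≤ 2400 / (d * ((2^k : ℕ) : ℝ)^d) * gB h := by
  obtain ⟨m, hmdef⟩ : ∃ m, m = 2^k := ⟨_, rfl⟩
  have hm0 : 0 < m := by rw [hmdef]; positivity
  have hmR : (m:ℝ) = 2^k := by rw [hmdef]; push_cast; rfl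
  have hm0' : (0:ℝ) < m := by exact_mod_cast hm0
  have hnn : ∀ x, 0 ≤ h x := fun x => by rcases h01 x with h | h <;> simp [h]
  have hb : ∀ j : Fin k, Tm (hscale j) n h ≤ 2 * (∑ x, h x) / (((2^(j.1+1) : ℕ) : ℝ) * ((2^k : ℕ) : ℝ)^d) ∧
    ((2^(j.1+1) : ℕ) : ℝ) * (Tm (hscale j) n h)^2 ≤
      ((2^(j.1+1) : ℕ) : ℝ)^d * gB h / (n * (((2^k : ℕ) : ℝ)^d)^2) :=
    fun j => Tm_bounds (hscale j) (by positivity) n hn h h01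
  have hT0 : ∀ j : Fin k, 0 ≤ Tm (hscale j) n h := fun j => Tm_nonneg _ _ _
  have hpoin := poincare h
  have hiso := fun σ hσ => isop (m := 2^k) (d := d) (by positivity) σ hσ h h01
  have hB0 : 0 ≤ gB h := gB_nonneg h
  have hpair : ∑ x, ∑ y, |h x - h y| = 2 * (∑ x, h x) * (((2^k : ℕ) : ℝ)^d - ∑ x, h x) := by
    have e : ∀ x y, |h x - h y| = h x + h y - 2 * (h x * h y) := by
      intro x y
      rcases h01 x with hx | hx <;> rcases h01 y with hy | hy <;> simp [hx, hy] <;> norm_num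
    simp only [e, Finset.sum_sub_distrib, Finset.sum_add_distrib, ← Finset.mul_sum,
      ← Finset.sum_mul, Finset.sum_const, Finset.card_univ, nsmul_eq_mul]
    simp
    ring
  rw [hpair] at hpoin
  have hsum0 : 0 ≤ ∑ x, h x := Finset.sum_nonneg fun x _ => hnn x
  generalize (∑ x, h x) = a at *
  generalize gB h = B at *
  set T : Fin k → ℝ := fun j => Tm (hscale j) n h with hTdef
  change ∀ j, T j ≤ _ ∧ _ * (T j)^2 ≤ _ at hb
  change ∀ j, 0 ≤ T j at hT0
  change ∑ j, T j ≤ _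
  clear_value T
  clear hTdef hpair hnn h01
  rw [← hmdef] at *
  have hsj : ∀ j : Fin k, ((2^(j.1+1) : ℕ) : ℝ) = 2 * 2^j.1 := fun j => by
    push_cast; ring
  simp only [hsj] at hb
  have hsm : ∀ j : Fin k, 2 * (2:ℝ)^j.1 ≤ m := fun j => by
    rw [hmR]
    calc 2 * (2:ℝ)^j.1 = 2^(j.1+1) := by ring
      _ ≤ 2^k := pow_le_pow_right₀ (by norm_num) j.2
  obtain ⟨e, rfl⟩ : ∃ e, d = e + 2 := ⟨d - 2, by omega⟩
  have hn' : (1:ℝ) ≤ n := by exact_mod_cast hn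
  have hd' : (2:ℝ) ≤ ((e+2 : ℕ):ℝ) := by exact_mod_cast hd
  generalize hD : ((e+2 : ℕ):ℝ) = D at *
  set N := (m:ℝ)^(e+2) with hN
  have hN0 : 0 < N := by positivity
  set K := 400 * B / (D * N) with hKdef
  have hK0 : 0 ≤ K := by positivity
  have hfin : ∀ u : ℝ, 0 < u →
      (∀ j : Fin k, T j ≤ K * min (1 / (u * 2^j.1)) (Real.sqrt (u * 2^j.1))) →
      ∑ j : Fin k, T j ≤ 2400 / (D * N) * B := by
    intro u hu hj
    have h1 := geom_sum_min k u hu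
    calc ∑ j : Fin k, T j ≤ ∑ j : Fin k, K * min (1 / (u * 2^j.1)) (Real.sqrt (u * 2^j.1)) :=
          Finset.sum_le_sum fun j _ => hj j
      _ = K * ∑ j ∈ Finset.range k, min (1 / (u * 2 ^ j)) (Real.sqrt (u * 2 ^ j)) := by
          rw [← Finset.mul_sum, Finset.sum_range]
      _ ≤ K * 6 := by gcongr
      _ = _ := by rw [hKdef]; ring
  have hn0 : (0:ℝ) < n := by linarith
  have hD2 : D^2 ≤ 5000 * n := by
    have : (1:ℝ) ≤ (21/20:ℝ)^(e+2) := one_le_pow₀ (by norm_num)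
    nlinarith [sq_nonneg D]
  rcases hsum0.eq_or_lt with ha | ha
  · have : ∑ j : Fin k, T j ≤ 0 := Finset.sum_nonpos fun j _ => by
      have := (hb j).1
      rw [← ha] at this
      simpa using this
    refine this.trans (by positivity)
  -- the quadratic bound at a reference scale `σ`
  have hquad : ∀ (σ L : ℝ), 0 < σ → σ^(e+1) ≤ L * B → L / n ≤ (400 / D)^2 →
      ∀ j : Fin k, 2 / σ * 2^j.1 ≤ 1 → (T j)^2 ≤ K^2 * (2 / σ * 2^j.1) := by
    intro σ L hσ hL1 hL2 j hj
    have h1 := (hb j).2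
    set s := 2 * (2:ℝ)^j.1 with hs
    have hs0 : 0 < s := by positivity
    have hsσ : s ≤ σ := by
      have : 2 / σ * 2^j.1 = s / σ := by rw [hs]; ring
      rw [this, div_le_one hσ] at hj
      exact hj
    have h2 : (T j)^2 ≤ s^(e+1) * B / (n * N^2) := by
      have : s * (T j)^2 ≤ s * (s^(e+1) * B / (n * N^2)) := by
        refine h1.trans (le_of_eq ?_); ring
      exact le_of_mul_le_mul_left this hs0
    have h3 : s^(e+1) ≤ σ^(e+1) * (s / σ) := by
      have : s^e ≤ σ^e := by gcongr
      calc s^(e+1) = s^e * s := by ring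
        _ ≤ σ^e * s := by gcongr
        _ = _ := by field_simp; ring
    calc (T j)^2 ≤ s^(e+1) * B / (n * N^2) := h2
      _ ≤ (L * B * (s / σ)) * B / (n * N^2) := by
          gcongr
          exact h3.trans (by gcongr)
      _ = (L / n) * (B^2 / N^2 * (s / σ)) := by field_simp
      _ ≤ (400 / D)^2 * (B^2 / N^2 * (s / σ)) := by gcongr
      _ = _ := by rw [hKdef, hs]; field_simp
  -- reference scale
  set σ := a ^ (((e+2 : ℕ):ℝ)⁻¹) with hσdef
  have hσ0 : 0 < σ := Real.rpow_pos_of_pos ha _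
  have hσa : σ^(e+2) = a := Real.rpow_inv_natCast_pow ha.le (by omega)
  by_cases hcase : σ ≤ 20/21 * m
  · have hB := hiso σ hσ0 hσa.ge
    have h1 : 1 / (21 * σ) ≤ 1 / σ - 1 / m := by
      have : 1 / (m:ℝ) ≤ 20 / (21 * σ) := by
        rw [div_le_div_iff₀ hm0' (by positivity)]; linarith
      have e1 : 1 / σ = 21 / (21 * σ) := by field_simp
      have e2 : 21 / (21 * σ) = 20 / (21 * σ) + 1 / (21 * σ) := by ring
      linarith
    have h2 : D * a * (1 / (21 * σ)) ≤ B := by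
      refine le_trans ?_ hB
      gcongr
    have h3 : D * a * (1 / (21 * σ)) = D * σ^(e+1) / 21 := by
      rw [← hσa]; field_simp; try ring
    rw [h3] at h2
    refine hfin (2 / σ) (by positivity) fun j => ?_
    refine scale_arith _ _ _ hK0 (by positivity) ?_ ?_
    · refine (hb j).1.trans ?_
      have : 2 * a / (2 * 2^j.1 * N) = (2 * σ^(e+1)) / N * (1 / (2 / σ * 2^j.1)) := by
        rw [← hσa]; field_simp; try ring
      rw [this]
      refine mul_le_mul_of_nonneg_right ?_ (by positivity)
      rw [hKdef, div_le_div_iff₀ hN0 (by positivity)]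
      nlinarith
    · refine hquad σ (21 / D) hσ0 ?_ ?_ j
      · rw [div_mul_eq_mul_div, le_div_iff₀ (by linarith)]; linarith
      · rw [div_div, div_pow, div_le_div_iff₀ (by positivity) (by positivity)]
        nlinarith
  · push Not at hcase
    have hBa : a ≤ m * B := by
      have h1 : a * N ≤ 2 * a * (N - a) := by nlinarith
      have h2 : a * N ≤ (m * B) * N := by linarith
      exact le_of_mul_le_mul_right h2 hN0
    have h1 : (m:ℝ)^(e+1) ≤ (21/20)^(e+2) * B := by
      have h2 : (m:ℝ)^(e+2) ≤ (21/20)^(e+2) * a := by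
        rw [← hσa, ← mul_pow]
        gcongr
        linarith
      have h3 : (m:ℝ) * (m:ℝ)^(e+1) ≤ m * ((21/20)^(e+2) * B) := by
        calc (m:ℝ) * (m:ℝ)^(e+1) = (m:ℝ)^(e+2) := by ring
          _ ≤ (21/20)^(e+2) * a := h2
          _ ≤ (21/20)^(e+2) * (m * B) := by gcongr
          _ = _ := by ring
      exact le_of_mul_le_mul_left h3 hm0'
    have hu1 : ∀ j : Fin k, 2 / (m:ℝ) * 2^j.1 ≤ 1 := fun j => by
      rw [div_mul_eq_mul_div, div_le_one hm0']; exact hsm j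
    have hq := hquad m ((21/20)^(e+2)) hm0' h1 (by
      rw [div_pow 400 D 2, div_le_div_iff₀ (by positivity) (by positivity)]
      nlinarith)
    refine hfin (2 / m) (by positivity) fun j => ?_
    refine scale_arith _ _ _ hK0 (by positivity) ?_ (hq j)
    have hu := hu1 j
    have hu0 : 0 < 2 / (m:ℝ) * 2^j.1 := by positivity
    have hTK : T j ≤ K := by
      refine abs_le_of_sq_le_sq' ?_ hK0 |>.2
      refine (hq j hu).trans ?_
      nlinarith [sq_nonneg K]
    refine hTK.trans ?_
    have : 1 ≤ 1 / (2 / (m:ℝ) * 2^j.1) := by rw [le_div_iff₀ hu0]; linarith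
    nlinarith

/-- The Sobolev-type inequality on the grid. -/
lemma sobolev {k d n : ℕ} (hd : 2 ≤ d) (hn : 1 ≤ n)
    (hnb : (d:ℝ)^2 * ((21:ℝ)/20)^d ≤ 5000 * n) (f : GPt (2^k) d → ℝ) :
    ∑ j : Fin k, Tm (hscale j) n f ≤ 2400 / (d * ((2^k : ℕ) : ℝ)^d) * gB f := by
  have hK : 0 ≤ 2400 / (d * ((2^k : ℕ) : ℝ)^d) := by positivity
  refine coarea (fun f : GPt (2^k) d → ℝ => ∑ j : Fin k, Tm (hscale j) n f)
    (fun f => 2400 / (d * ((2^k : ℕ) : ℝ)^d) * gB f) ?_ ?_ ?_ ?_ f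
  · intro f h c hc
    rw [Finset.mul_sum, ← Finset.sum_add_distrib]
    refine Finset.sum_le_sum fun j _ => ?_
    unfold Tm
    rw [mul_left_comm c, ← mul_add]
    refine mul_le_mul_of_nonneg_left ?_ (by positivity)
    rw [Finset.mul_sum (a := c), ← Finset.sum_add_distrib]
    refine Finset.sum_le_sum fun ω _ => ?_
    have : ∑ x, (f x + c * h x) * smp (hscale j) n ω x =
        ∑ x, f x * smp (hscale j) n ω x + c * ∑ x, h x * smp (hscale j) n ω x := by
      rw [Finset.mul_sum, ← Finset.sum_add_distrib]
      exact Finset.sum_congr rfl fun x _ => by ring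
    rw [this]
    refine (abs_add_le _ _).trans ?_
    rw [abs_mul, abs_of_nonneg hc]
  · intro f h c hc hcom
    have : gB (fun x => f x + c * h x) = gB f + c * gB h := by
      unfold gB
      simp only [hcom, Finset.sum_add_distrib, ← Finset.mul_sum]
    rw [this]; ring
  · intro f hf
    have h1 : ∀ j : Fin k, Tm (hscale j) n f = 0 := by
      intro j
      unfold Tm
      rw [Finset.sum_eq_zero, mul_zero]
      intro ω _
      have h2 : 0 < 2^k := by positivity
      let x0 : GPt (2^k) d := fun _ => ⟨0, h2⟩
      have : ∑ x, f x * smp (hscale j) n ω x = f x0 * ∑ x, smp (hscale j) n ω x := by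
        rw [Finset.mul_sum]
        exact Finset.sum_congr rfl fun x _ => by rw [hf x x0]
      rw [this, smp_sum_zero (hscale j) h2 n hn]
      simp
    simp only [h1, Finset.sum_const_zero]
    exact mul_nonneg hK (gB_nonneg f)
  · intro h h01
    by_cases hhalf : ∑ x, h x ≤ (((2^k : ℕ) : ℝ)^d) / 2
    · exact sobolev_half hd hn hnb h h01 hhalf
    · have := sobolev_half hd hn hnb (fun x => 1 - h x) (fun x => by
        rcases h01 x with h | h <;> simp [h]) (by
          rw [Finset.sum_sub_distrib]
          simp only [Finset.sum_const, Finset.card_univ, nsmul_eq_mul, Fintype.card_pi,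
            Fintype.card_fin, Finset.prod_const]
          push_cast at hhalf ⊢
          linarith)
      simp only [gB_compl] at this
      simpa only [Tm_compl (hscale _) (show 0 < 2^k by positivity) n hn] using this

lemma gd_nonneg {m d : ℕ} (u v : GPt m d) : 0 ≤ gdistM u v :=
  Finset.sum_nonneg fun _ _ => abs_nonneg _

lemma gd_comm {m d : ℕ} (u v : GPt m d) : gdistM u v = gdistM v u :=
  Finset.sum_congr rfl fun _ _ => abs_sub_comm _ _

lemma gd_self {m d : ℕ} (u : GPt m d) : gdistM u u = 0 := by
  simp [gdistM]

lemma gd_tri {m d : ℕ} (u v w : GPt m d) : gdistM u w ≤ gdistM u v + gdistM v w := by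
  unfold gdistM
  rw [← Finset.sum_add_distrib]
  exact Finset.sum_le_sum fun _ _ => abs_sub_le _ _ _

lemma gd_le {m d : ℕ} (u v : GPt m d) : gdistM u v ≤ d * m := by
  unfold gdistM
  calc _ ≤ ∑ i : Fin d, (m:ℝ) := by
        refine Finset.sum_le_sum fun i _ => ?_
        have h1 : ((u i : ℕ) : ℝ) < m := by exact_mod_cast (u i).2
        have h2 : ((v i : ℕ) : ℝ) < m := by exact_mod_cast (v i).2
        have h3 : (0:ℝ) ≤ ((u i : ℕ) : ℝ) := Nat.cast_nonneg _
        have h4 : (0:ℝ) ≤ ((v i : ℕ) : ℝ) := Nat.cast_nonneg _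
        rw [abs_le]; constructor <;> linarith
    _ = _ := by simp

lemma pair_bound {m d : ℕ} (μ : GPt m d → ℝ) (hμ : ∑ x, μ x = 0) (f : GPt m d → ℝ)
    (hf : ∀ u v, |f u - f v| ≤ gdistM u v) : |∑ x, f x * μ x| ≤ d * m * ∑ x, |μ x| := by
  rcases isEmpty_or_nonempty (GPt m d) with h | ⟨⟨x0⟩⟩
  · simp
  · have : ∑ x, f x * μ x = ∑ x, (f x - f x0) * μ x := by
      simp only [sub_mul, Finset.sum_sub_distrib, ← Finset.mul_sum, hμ]
      ring
    rw [this, Finset.mul_sum]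
    refine (Finset.abs_sum_le_sum_abs _ _).trans (Finset.sum_le_sum fun x _ => ?_)
    rw [abs_mul]
    exact mul_le_mul_of_nonneg_right ((hf _ _).trans (gd_le _ _)) (abs_nonneg _)

lemma le_tc {m d : ℕ} (μ : GPt m d → ℝ) (hμ : ∑ x, μ x = 0) (f : GPt m d → ℝ)
    (hf : ∀ u v, |f u - f v| ≤ gdistM u v) : |∑ x, f x * μ x| ≤ tcNormG m d μ := by
  refine le_csSup ⟨d * m * ∑ x, |μ x|, ?_⟩ ⟨f, hf, rfl⟩
  rintro r ⟨g, hg, rfl⟩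
  exact pair_bound μ hμ g hg

lemma tc_le {m d : ℕ} (μ : GPt m d → ℝ) (B : ℝ)
    (h : ∀ f : GPt m d → ℝ, (∀ u v, |f u - f v| ≤ gdistM u v) → |∑ x, f x * μ x| ≤ B) :
    tcNormG m d μ ≤ B := by
  refine csSup_le ⟨_, fun _ => 0, fun u v => by simpa using gd_nonneg u v, rfl⟩ ?_
  rintro r ⟨g, hg, rfl⟩
  exact h g hg

lemma tc_le_norm {m d : ℕ} (μ : GPt m d → ℝ) (hμ : ∑ x, μ x = 0) :
    tcNormG m d μ ≤ d * m * ∑ x, |μ x| := tc_le μ _ fun f hf => pair_bound μ hμ f hf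

lemma tc_nonneg {m d : ℕ} (μ : GPt m d → ℝ) (hμ : ∑ x, μ x = 0) : 0 ≤ tcNormG m d μ :=
  (abs_nonneg _).trans (le_tc μ hμ (fun _ => 0) fun u v => by simpa using gd_nonneg u v)

lemma tc_add {m d : ℕ} (μ ν : GPt m d → ℝ) (hμ : ∑ x, μ x = 0) (hν : ∑ x, ν x = 0) :
    tcNormG m d (μ + ν) ≤ tcNormG m d μ + tcNormG m d ν := by
  refine tc_le _ _ fun f hf => ?_
  simp only [Pi.add_apply, mul_add, Finset.sum_add_distrib]
  exact (abs_add_le _ _).trans (add_le_add (le_tc μ hμ f hf) (le_tc ν hν f hf))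

lemma tc_smul_le {m d : ℕ} (a : ℝ) (μ : GPt m d → ℝ) (hμ : ∑ x, μ x = 0) :
    tcNormG m d (a • μ) ≤ |a| * tcNormG m d μ := by
  refine tc_le _ _ fun f hf => ?_
  have : ∑ x, f x * (a • μ) x = a * ∑ x, f x * μ x := by
    rw [Finset.mul_sum]
    exact Finset.sum_congr rfl fun x _ => by simp; ring
  rw [this, abs_mul]
  exact mul_le_mul_of_nonneg_left (le_tc μ hμ f hf) (abs_nonneg _)

lemma tc_single {m d : ℕ} (x y : GPt m d) :
    tcNormG m d (Pi.single x 1 - Pi.single y 1) ≤ gdistM x y := by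
  refine tc_le _ _ fun f hf => ?_
  have : ∑ z, f z * (Pi.single x 1 - Pi.single y 1 : GPt m d → ℝ) z = f x - f y := by
    simp [mul_sub, Finset.sum_sub_distrib, Pi.single_apply]
  rw [this]
  exact hf x y

lemma gd_nxt {m d : ℕ} (x : GPt m d) (i : Fin d) :
    gdistM (Function.update x i (nxt (x i))) x ≤ 1 := by
  unfold gdistM
  rw [Finset.sum_eq_single i]
  · simp only [Function.update_self]
    unfold nxt
    split_ifs <;> simp
  · intro b _ hb
    simp [Function.update_of_ne hb]
  · simp

lemma line_weight (t : ℝ) (h0 : 0 < t) (h1 : t < 1) (m x : ℕ) :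
    ∑ y ∈ Finset.range m, t ^ ((x - y) + (y - x)) ≤ (1 + t) / (1 - t) := by
  have hg : ∀ k : ℕ, ∑ i ∈ Finset.range k, t ^ i ≤ 1 / (1 - t) := by
    intro k
    have h2 := mul_neg_geom_sum t k
    rw [le_div_iff₀ (by linarith), mul_comm, h2]
    have : 0 < t ^ k := by positivity
    linarith
  calc _ ≤ ∑ y ∈ Finset.range (x + 1 + m), t ^ ((x - y) + (y - x)) :=
        Finset.sum_le_sum_of_subset_of_nonneg
          (Finset.range_mono (by omega)) (fun i _ _ => by positivity)
    _ = ∑ y ∈ Finset.range (x+1), t ^ ((x - y) + (y - x)) +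
          ∑ i ∈ Finset.range m, t ^ ((x - (x + 1 + i)) + (x + 1 + i - x)) := by
        rw [Finset.sum_range_add]
    _ = ∑ i ∈ Finset.range (x+1), t ^ i + t * ∑ i ∈ Finset.range m, t ^ i := by
        congr 1
        · rw [← Finset.sum_range_reflect]
          refine Finset.sum_congr rfl fun y hy => ?_
          rw [Finset.mem_range] at hy
          congr 1
          omega
        · rw [Finset.mul_sum]
          refine Finset.sum_congr rfl fun y hy => ?_
          rw [← pow_succ']
          congr 1
          omega
    _ ≤ 1 / (1-t) + t * (1 / (1-t)) := by
        gcongr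
        · exact hg _
        · exact hg _
    _ = _ := by ring

lemma ball_weight {m d : ℕ} (t : ℝ) (h0 : 0 < t) (h1 : t < 1) (x : GPt m d) :
    ∑ y : GPt m d, Real.exp (Real.log t * gdistM x y) ≤ ((1 + t) / (1 - t)) ^ d := by
  have e : ∀ y : GPt m d, Real.exp (Real.log t * gdistM x y) =
      ∏ i, t ^ (((x i : ℕ) - (y i : ℕ)) + ((y i : ℕ) - (x i : ℕ))) := by
    intro y
    unfold gdistM
    rw [Finset.mul_sum, Real.exp_sum]
    refine Finset.prod_congr rfl fun i _ => ?_
    have : |((x i : ℕ) : ℝ) - ((y i : ℕ) : ℝ)| =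
        (((((x i : ℕ) - (y i : ℕ)) + ((y i : ℕ) - (x i : ℕ))) : ℕ) : ℝ) := by
      rcases le_total (x i : ℕ) (y i : ℕ) with h | h
      · rw [Nat.sub_eq_zero_of_le h, zero_add, Nat.cast_sub h, abs_sub_comm, abs_of_nonneg]
        exact sub_nonneg.2 (by exact_mod_cast h)
      · rw [Nat.sub_eq_zero_of_le h, add_zero, Nat.cast_sub h, abs_of_nonneg]
        exact sub_nonneg.2 (by exact_mod_cast h)
    rw [this, mul_comm, Real.exp_nat_mul, Real.exp_log h0]
  simp only [e]
  have := Fintype.prod_sum (fun (i : Fin d) (z : Fin m) =>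
    t ^ (((x i : ℕ) - (z : ℕ)) + ((z : ℕ) - (x i : ℕ))))
  rw [← this]
  calc _ ≤ ∏ i : Fin d, (1 + t) / (1 - t) := by
        refine Finset.prod_le_prod (fun i _ => Finset.sum_nonneg fun _ _ => by positivity) ?_
        intro i _
        rw [Fin.sum_univ_eq_sum_range
          (fun z => t ^ (((x i : ℕ) - z) + (z - (x i : ℕ)))) m]
        exact line_weight t h0 h1 m _
    _ = _ := by rw [Finset.prod_const, Finset.card_univ, Fintype.card_fin]

lemma cover_arith (s d n Q : ℝ) (hs : 2 ≤ s) (D : ℕ) (hD : 2 ≤ D) (hd : d = D)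
    (hQ : 0 ≤ Q) (hn : n ≤ ((11:ℝ)/10)^D) (t : ℝ) (ht : t = (3*s-5)/(3*s+5)) :
    n * Q * (Real.exp (-Real.log t * (d * s / 400)) * ((1 + t) / (1 - t)) ^ D)
      ≤ Q * s ^ D / 2 := by
  have h5 : 0 < 3 * s - 5 := by linarith
  have e1 : (1 + t) / (1 - t) = 3/5 * s := by
    rw [ht]; field_simp; ring
  have t0 : 0 < t := by rw [ht]; positivity
  have l1 : -Real.log t ≤ 10 / (3*s-5) := by
    rw [← Real.log_inv]
    refine (Real.log_le_sub_one_of_pos (by positivity)).trans (le_of_eq ?_)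
    rw [ht]; field_simp; ring
  have l2 : -Real.log t * (d * s / 400) ≤ D * (1/20) := by
    have h1 : 0 ≤ d * s / 400 := by rw [hd]; positivity
    refine (mul_le_mul_of_nonneg_right l1 h1).trans ?_
    rw [hd, div_mul_eq_mul_div, div_le_iff₀ h5]
    have : (0:ℝ) ≤ D := by positivity
    nlinarith
  have l3 : Real.exp (-Real.log t * (d * s / 400)) ≤ (20/19)^D := by
    refine (Real.exp_le_exp.2 l2).trans ?_
    rw [Real.exp_nat_mul]
    refine pow_le_pow_left₀ (Real.exp_pos _).le ?_ D
    have h1 := Real.one_sub_le_exp_neg (1/20)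
    rw [Real.exp_neg] at h1
    have h2 := Real.exp_pos (1/20)
    have h3 : (19/20:ℝ) * Real.exp (1/20) ≤ 1 := by
      have := mul_le_mul_of_nonneg_right h1 h2.le
      rw [inv_mul_cancel₀ h2.ne'] at this
      linarith
    linarith
  rw [e1]
  calc _ ≤ ((11:ℝ)/10)^D * Q * ((20/19)^D * (3/5 * s)^D) := by gcongr
    _ = (11/10*(20/19)*(3/5) : ℝ)^D * (Q * s^D) := by
        simp only [mul_pow]; ring
    _ ≤ (1/2) * (Q * s^D) := by
        refine mul_le_mul_of_nonneg_right ?_ (by positivity)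
        refine (pow_le_pow_of_le_one (by norm_num) (by norm_num) hD).trans ?_
        norm_num
    _ = _ := by ring

lemma tc_smp {m s M d n : ℕ} (hm : M * s = m) (hm0 : 0 < m) (hs : 2 ≤ s) (hd : 2 ≤ d) (hn : 1 ≤ n)
    (hnb : (n:ℝ) ≤ ((11:ℝ)/10)^d) (ω : GPt M d × Fin n → GPt s d) :
    (d:ℝ) / 800 ≤ tcNormG m d (smp hm n ω) := by
  have hM : 0 < M := Nat.pos_of_ne_zero (by rintro rfl; simp at hm; omega)
  have hs2 : (2:ℝ) ≤ s := by exact_mod_cast hs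
  let p0 : GPt M d × Fin n := (fun _ => ⟨0, hM⟩, ⟨0, hn⟩)
  have hne : (Finset.univ : Finset (GPt M d × Fin n)).Nonempty := ⟨p0, Finset.mem_univ _⟩
  set r : ℝ := d * s / 400 with hr
  have hr0 : 0 ≤ r := by positivity
  let f : GPt m d → ℝ := fun y =>
    Finset.univ.inf' hne (fun p : GPt M d × Fin n => min r (gdistM y (pt hm p.1 (ω p))))
  have hf0 : ∀ y, 0 ≤ f y := fun y => by
    refine Finset.le_inf' _ _ fun p _ => le_min hr0 (gd_nonneg _ _)
  have hf1 : ∀ u v, f u ≤ f v + gdistM u v := by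
    intro u v
    obtain ⟨p, -, hp⟩ := Finset.exists_mem_eq_inf' hne
      (fun p : GPt M d × Fin n => min r (gdistM v (pt hm p.1 (ω p))))
    have h1 : f v = min r (gdistM v (pt hm p.1 (ω p))) := hp
    have h2 : f u ≤ min r (gdistM u (pt hm p.1 (ω p))) := Finset.inf'_le _ (Finset.mem_univ p)
    rw [h1, ← min_add_add_right]
    refine h2.trans (min_le_min ?_ ?_)
    · linarith [gd_nonneg u v]
    · linarith [gd_tri u v (pt hm p.1 (ω p))]
  have hfL : ∀ u v, |f u - f v| ≤ gdistM u v := by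
    intro u v
    rw [abs_le]
    constructor
    · have := hf1 v u
      rw [gd_comm] at this; linarith
    · linarith [hf1 u v]
  have hfp : ∀ p : GPt M d × Fin n, f (pt hm p.1 (ω p)) = 0 := by
    intro p
    refine le_antisymm ?_ (hf0 _)
    have h2 : f (pt hm p.1 (ω p)) ≤ min r (gdistM (pt hm p.1 (ω p)) (pt hm p.1 (ω p))) :=
      Finset.inf'_le _ (Finset.mem_univ p)
    rw [gd_self] at h2
    exact h2.trans (min_le_right _ _)
  set t : ℝ := (3*(s:ℝ)-5)/(3*s+5) with ht
  have h5 : 0 < 3 * (s:ℝ) - 5 := by linarith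
  have t0 : 0 < t := by rw [ht]; positivity
  have t1 : t < 1 := by rw [ht, div_lt_one (by positivity)]; linarith
  have hcov : ∀ y, r ≤ f y + r * ∑ p : GPt M d × Fin n,
      Real.exp (-Real.log t * r) * Real.exp (Real.log t * gdistM (pt hm p.1 (ω p)) y) := by
    intro y
    by_cases hy : ∃ p : GPt M d × Fin n, gdistM y (pt hm p.1 (ω p)) ≤ r
    · obtain ⟨p, hp⟩ := hy
      have h1 : (1:ℝ) ≤ ∑ p : GPt M d × Fin n, Real.exp (-Real.log t * r) *
          Real.exp (Real.log t * gdistM (pt hm p.1 (ω p)) y) := by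
        refine le_trans ?_ (Finset.single_le_sum
          (f := fun p : GPt M d × Fin n => Real.exp (-Real.log t * r) *
            Real.exp (Real.log t * gdistM (pt hm p.1 (ω p)) y))
          (fun q _ => by positivity) (Finset.mem_univ p))
        rw [← Real.exp_add]
        refine Real.one_le_exp ?_
        have hl : Real.log t ≤ 0 := (Real.log_neg t0 t1).le
        rw [gd_comm] at hp
        nlinarith
      nlinarith [hf0 y]
    · push Not at hy
      have h1 : r ≤ f y := Finset.le_inf' _ _ fun p _ => le_min le_rfl (hy p).le
      have h2 : 0 ≤ r * ∑ p : GPt M d × Fin n,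
          Real.exp (-Real.log t * r) * Real.exp (Real.log t * gdistM (pt hm p.1 (ω p)) y) :=
        mul_nonneg hr0 (Finset.sum_nonneg fun p _ => by positivity)
      linarith
  have hsum : (m:ℝ)^d * r ≤ ∑ y, f y + r * ((m:ℝ)^d / 2) := by
    have h1 := Finset.sum_le_sum fun y (_ : y ∈ Finset.univ) => hcov y
    rw [Finset.sum_add_distrib, ← Finset.mul_sum, Finset.sum_comm] at h1
    simp only [Finset.sum_const, Finset.card_univ, Fintype.card_pi, Fintype.card_fin,
      Finset.prod_const, nsmul_eq_mul, Nat.cast_pow] at h1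
    refine h1.trans (add_le_add le_rfl (mul_le_mul_of_nonneg_left ?_ hr0))
    calc _ ≤ ∑ p : GPt M d × Fin n, Real.exp (-Real.log t * r) * ((1 + t) / (1 - t)) ^ d := by
          refine Finset.sum_le_sum fun p _ => ?_
          rw [← Finset.mul_sum]
          exact mul_le_mul_of_nonneg_left (ball_weight t t0 t1 _) (by positivity)
      _ = n * (M:ℝ)^d * (Real.exp (-Real.log t * r) * ((1 + t) / (1 - t)) ^ d) := by
          rw [Finset.sum_const, Finset.card_univ, nsmul_eq_mul, Fintype.card_prod,
            Fintype.card_pi, Fintype.card_fin]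
          simp only [Fintype.card_fin, Finset.prod_const, Finset.card_univ, Nat.cast_mul,
            Nat.cast_pow]
          ring
      _ ≤ (M:ℝ)^d * (s:ℝ)^d / 2 :=
          cover_arith s d n ((M:ℝ)^d) hs2 d hd rfl (by positivity) hnb t ht
      _ = _ := by rw [← hm]; push_cast; rw [mul_pow]
  refine le_trans ?_ (le_tc _ (smp_sum_zero hm hm0 n hn ω) f hfL)
  rw [smp_pair]
  simp only [hfp, Finset.sum_const_zero, mul_zero, zero_sub, mul_neg, abs_neg]
  have hmp : (0:ℝ) < (m:ℝ)^d := by positivity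
  refine le_trans ?_ (le_abs_self _)
  have h3 : r / 2 ≤ ((m:ℝ)^d)⁻¹ * ∑ x, f x := by
    rw [← div_eq_inv_mul, le_div_iff₀ hmp]; linarith
  calc (d:ℝ)/800 = (s:ℝ)⁻¹ * (r/2) := by rw [hr]; field_simp; norm_num
    _ ≤ _ := mul_le_mul_of_nonneg_left h3 (by positivity)

section linearization

variable {E X : Type*} [NormedAddCommGroup E] [NormedSpace ℝ E] [FiniteDimensional ℝ E]
  [MeasurableSpace E] [BorelSpace E] [NormedAddCommGroup X] [NormedSpace ℝ X] [CompleteSpace X]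

lemma mollify (ν : Measure E) [ν.IsAddHaarMeasure] (q : E → ℝ) (L C : ℝ) (hL : 0 < L)
    (hC : 0 ≤ C) (hqL : ∀ x, q x ≤ L * ‖x‖) (H : E → X)
    (hu : ∀ x y, ‖H x - H y‖ ≤ C * q (x - y)) (ε : ℝ) (hε : 0 < ε) :
    ∃ G : E → X, ContDiff ℝ 1 G ∧ (∀ u, ‖G u - H u‖ ≤ ε) ∧
      ∀ u x, ‖G (u + x) - G u‖ ≤ C * q x := by
  have hlip : ∀ x y, ‖H x - H y‖ ≤ C * L * ‖x - y‖ := fun x y =>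
    (hu x y).trans (by rw [mul_assoc]; exact mul_le_mul_of_nonneg_left (hqL _) hC)
  have hHc : Continuous H := by
    have : LipschitzWith (Real.toNNReal (C * L)) H := by
      refine LipschitzWith.of_dist_le_mul fun x y => ?_
      rw [dist_eq_norm, dist_eq_norm, Real.coe_toNNReal _ (by positivity)]
      exact hlip x y
    exact this.continuous
  let r : ℝ := ε / (C * L + 1)
  have hr : 0 < r := by positivity
  let φ : ContDiffBump (0 : E) := ⟨r/2, r, by positivity, by linarith⟩
  let G : E → X := convolution (φ.normed ν) H (ContinuousLinearMap.lsmul ℝ ℝ) ν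
  have hG : ∀ u, G u = ∫ t, φ.normed ν t • H (u - t) ∂ν := fun u => rfl
  have hli : LocallyIntegrable H ν := hHc.locallyIntegrable
  have hex : ∀ u, Integrable (fun t => φ.normed ν t • H (u - t)) ν := fun u =>
    (φ.hasCompactSupport_normed (μ := ν)).convolutionExists_left
      (ContinuousLinearMap.lsmul ℝ ℝ) (φ.continuous_normed (μ := ν)) hli u
  refine ⟨G, ?_, ?_, ?_⟩
  · exact (φ.hasCompactSupport_normed (μ := ν)).contDiff_convolution_left _
      (φ.contDiff_normed (μ := ν)) hli
  · intro u
    rw [← dist_eq_norm]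
    refine φ.dist_normed_convolution_le hHc.aestronglyMeasurable fun x hx => ?_
    rw [dist_eq_norm]
    refine (hlip x u).trans ?_
    have h1 : ‖x - u‖ < r := by rw [← dist_eq_norm]; exact hx
    have h2 : r * (C * L + 1) = ε := div_mul_cancel₀ _ (by positivity)
    have h3 : C * L * ‖x - u‖ ≤ C * L * r := mul_le_mul_of_nonneg_left h1.le (by positivity)
    linarith
  · intro u x
    rw [hG, hG, ← integral_sub (hex _) (hex _)]
    calc _ ≤ ∫ t, φ.normed ν t * (C * q x) ∂ν := by
          refine norm_integral_le_of_norm_le ((φ.integrable_normed (μ := ν)).mul_const _) ?_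
          refine Filter.Eventually.of_forall fun t => ?_
          rw [← smul_sub, norm_smul, Real.norm_of_nonneg (φ.nonneg_normed _)]
          refine mul_le_mul_of_nonneg_left ?_ (φ.nonneg_normed _)
          refine (hu _ _).trans (le_of_eq ?_)
          congr 2
          abel
      _ = _ := by rw [integral_mul_const, φ.integral_normed, one_mul]

lemma fderiv_bound (q : E → ℝ) (C : ℝ) (hC : 0 ≤ C) (hq : ∀ (t : ℝ) x, q (t • x) ≤ |t| * q x)
    (G : E → X) (hG : ContDiff ℝ 1 G) (hb : ∀ u x, ‖G (u + x) - G u‖ ≤ C * q x) (u x : E) :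
    ‖fderiv ℝ G u x‖ ≤ C * q x := by
  have h1 : HasFDerivAt G (fderiv ℝ G u) u :=
    (hG.differentiable (by norm_num) u).hasFDerivAt
  have h2 := (h1.hasLineDerivAt x).tendsto_slope_zero
  refine le_of_tendsto h2.norm ?_
  filter_upwards [self_mem_nhdsWithin] with t ht
  have ht' : t ≠ 0 := ht
  rw [norm_smul, norm_inv, Real.norm_eq_abs, inv_mul_le_iff₀ (abs_pos.2 ht')]
  refine (hb _ _).trans ?_
  calc C * q (t • x) ≤ C * (|t| * q x) := mul_le_mul_of_nonneg_left (hq _ _) hC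
    _ = _ := by ring

lemma ftc_bound (G : E → X) (hG : ContDiff ℝ 1 G) (u x : E) :
    ENNReal.ofReal ‖G (u + x) - G u‖ ≤
      ∫⁻ s in Set.Icc (0:ℝ) 1, ‖fderiv ℝ G (u + s • x) x‖ₑ := by
  have hd : ∀ s : ℝ, HasDerivAt (fun s : ℝ => G (u + s • x)) (fderiv ℝ G (u + s • x) x) s := by
    intro s
    have h1 : HasFDerivAt G (fderiv ℝ G (u + s • x)) (u + s • x) :=
      (hG.differentiable (by norm_num) _).hasFDerivAt
    have h2 : HasDerivAt (fun s : ℝ => u + s • x) x s := by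
      simpa using ((hasDerivAt_id s).smul_const x).const_add u
    exact h1.comp_hasDerivAt s h2
  have hc : Continuous fun s : ℝ => fderiv ℝ G (u + s • x) x := by
    have := hG.continuous_fderiv (by norm_num)
    fun_prop
  have h3 := intervalIntegral.integral_eq_sub_of_hasDerivAt (fun s _ => hd s)
    (hc.intervalIntegrable 0 1)
  simp only [one_smul, zero_smul, add_zero] at h3
  rw [← h3, intervalIntegral.integral_of_le zero_le_one, ofReal_norm]
  refine (enorm_integral_le_lintegral_enorm _).trans ?_
  exact lintegral_mono_set Set.Ioc_subset_Icc_self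

lemma avg_bound (ν : Measure E) [ν.IsAddHaarMeasure] (G : E → X) (hG : ContDiff ℝ 1 G)
    (x : E) (R r : ℝ) (hx : ‖x‖ ≤ r) :
    ∫⁻ u in Metric.ball 0 R, ENNReal.ofReal ‖G (u + x) - G u‖ ∂ν ≤
      ∫⁻ u in Metric.ball 0 (R + r), ‖fderiv ℝ G u x‖ₑ ∂ν := by
  have hc := hG.continuous_fderiv (by norm_num)
  calc _ ≤ ∫⁻ u in Metric.ball 0 R,
        (∫⁻ s in Set.Icc (0:ℝ) 1, ‖fderiv ℝ G (u + s • x) x‖ₑ) ∂ν :=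
        lintegral_mono fun u => ftc_bound G hG u x
    _ = ∫⁻ s in Set.Icc (0:ℝ) 1,
        (∫⁻ u in Metric.ball 0 R, ‖fderiv ℝ G (u + s • x) x‖ₑ ∂ν) := by
        refine lintegral_lintegral_swap ?_
        have : Continuous (Function.uncurry fun (u : E) (s : ℝ) =>
            ‖fderiv ℝ G (u + s • x) x‖ₑ) := by
          unfold Function.uncurry
          fun_prop
        exact this.measurable.aemeasurable
    _ ≤ ∫⁻ s in Set.Icc (0:ℝ) 1,
        (∫⁻ u in Metric.ball 0 (R + r), ‖fderiv ℝ G u x‖ₑ ∂ν) := by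
        refine setLIntegral_mono measurable_const fun s hs => ?_
        rw [← lintegral_indicator Metric.isOpen_ball.measurableSet,
          ← lintegral_indicator Metric.isOpen_ball.measurableSet,
          ← lintegral_add_right_eq_self (μ := ν)
            ((Metric.ball (0:E) (R + r)).indicator fun u => ‖fderiv ℝ G u x‖ₑ) (s • x)]
        refine lintegral_mono fun u => ?_
        by_cases hu : u ∈ Metric.ball (0:E) R
        · have : u + s • x ∈ Metric.ball (0:E) (R + r) := by
            rw [mem_ball_zero_iff] at hu ⊢
            have h1 := norm_add_le u (s • x)
            have h2 : ‖s • x‖ ≤ 1 * ‖x‖ := by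
              rw [norm_smul, Real.norm_of_nonneg hs.1]
              exact mul_le_mul_of_nonneg_right hs.2 (norm_nonneg _)
            linarith
          rw [Set.indicator_of_mem hu, Set.indicator_of_mem this]
        · rw [Set.indicator_of_notMem hu]
          exact zero_le
    _ = _ := by simp

lemma ball_ratio [Nontrivial E] (ν : Measure E) [ν.IsAddHaarMeasure] (r : ℝ) (hr : 0 < r) :
    ∃ R : ℝ, 0 < R ∧ ν (Metric.ball 0 (R + r)) ≤ 2 * ν (Metric.ball 0 R) := by
  set k := Module.finrank ℝ E with hk
  refine ⟨(2 * k + 1) * r, by positivity, ?_⟩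
  rw [ν.addHaar_ball _ (show 0 ≤ (2 * (k:ℝ) + 1) * r + r by positivity),
    ν.addHaar_ball _ (show 0 ≤ (2 * (k:ℝ) + 1) * r by positivity), ← mul_assoc]
  refine mul_le_mul' ?_ le_rfl
  rw [← ENNReal.ofReal_ofNat, ← ENNReal.ofReal_mul (by norm_num)]
  refine ENNReal.ofReal_le_ofReal ?_
  rw [← hk]
  have h1 := one_add_mul_le_pow (a := -(1 / (2 * (k:ℝ) + 2)))
    (by
      have : 1 / (2 * (k:ℝ) + 2) ≤ 1 := by
        rw [div_le_one (by positivity)]; have : (0:ℝ) ≤ k := by positivity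
        linarith
      linarith) k
  have h2 : (1:ℝ)/2 ≤ 1 + k * (-(1 / (2 * (k:ℝ) + 2))) := by
    have : k * (1 / (2 * (k:ℝ) + 2)) ≤ 1/2 := by
      rw [mul_one_div, div_le_iff₀ (by positivity)]; linarith
    linarith
  have h3 : ((2 * (k:ℝ) + 1) * r + r) * (1 + -(1 / (2 * (k:ℝ) + 2))) = (2 * k + 1) * r := by
    field_simp; ring
  have h5 : ((2 * (k:ℝ) + 1) * r)^k = ((2 * (k:ℝ) + 1) * r + r)^k *
      (1 + -(1 / (2 * (k:ℝ) + 2)))^k := by rw [← mul_pow, h3]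
  rw [h5]
  have h4 : 0 < ((2 * (k:ℝ) + 1) * r + r)^k := by positivity
  nlinarith

theorem linearize [Nontrivial E] (ν : Measure E) [ν.IsAddHaarMeasure] {ι : Type*} [Fintype ι]
    (q : E → ℝ) (L C B : ℝ) (hL : 0 < L)
    (hC : 0 ≤ C) (hB : 0 ≤ B) (hqL : ∀ x, q x ≤ L * ‖x‖) (hq : ∀ (t : ℝ) x, q (t • x) ≤ |t| * q x)
    (H : E → X) (hl : ∀ x y, q (x - y) ≤ ‖H x - H y‖)
    (hu : ∀ x y, ‖H x - H y‖ ≤ C * q (x - y)) (μ : ι → E)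
    (hT : ∀ T : E →L[ℝ] X, (∀ x, ‖T x‖ ≤ C * q x) → ∑ i, ‖T (μ i)‖ ≤ B) :
    ∑ i, q (μ i) ≤ 2 * B := by
  have key : ∀ ε : ℝ, 0 < ε → ∑ i, (q (μ i) - 2 * ε) ≤ 2 * B := by
    intro ε hε
    obtain ⟨G, hG1, hG2, hG3⟩ := mollify ν q L C hL hC hqL H hu ε hε
    have hcf := hG1.continuous_fderiv (by norm_num)
    set r : ℝ := 1 + ∑ i, ‖μ i‖ with hr
    have hr0 : 0 < r := by positivity
    have hμr : ∀ i, ‖μ i‖ ≤ r := fun i => by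
      have := Finset.single_le_sum (f := fun i => ‖μ i‖) (fun i _ => norm_nonneg _)
        (Finset.mem_univ i)
      linarith
    obtain ⟨R, hR, hRr⟩ := ball_ratio ν r hr0
    set V := ν (Metric.ball (0:E) R) with hV
    have hV0 : V ≠ 0 := (Metric.measure_ball_pos ν _ hR).ne'
    have hVt : V ≠ ⊤ := measure_ball_lt_top.ne
    have h1 : ∀ i, ENNReal.ofReal (q (μ i) - 2 * ε) * V ≤
        ∫⁻ u in Metric.ball 0 (R + r), ‖fderiv ℝ G u (μ i)‖ₑ ∂ν := by
      intro i
      refine le_trans ?_ (avg_bound ν G hG1 (μ i) R r (hμr i))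
      rw [← setLIntegral_const]
      refine lintegral_mono fun u => ENNReal.ofReal_le_ofReal ?_
      have a1 := hl (u + μ i) u
      rw [add_sub_cancel_left] at a1
      have a2 := hG2 (u + μ i)
      have a3 := hG2 u
      have a4 : ‖H (u + μ i) - H u‖ ≤ ‖G (u + μ i) - G u‖ + ‖G (u + μ i) - H (u + μ i)‖
          + ‖G u - H u‖ := by
        have : H (u + μ i) - H u =
            (G (u + μ i) - G u) - (G (u + μ i) - H (u + μ i)) + (G u - H u) := by abel
        rw [this]
        exact (norm_add_le _ _).trans (add_le_add (norm_sub_le _ _) le_rfl)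
      linarith
    have h2 : ENNReal.ofReal (∑ i, (q (μ i) - 2 * ε)) * V ≤ ENNReal.ofReal (2 * B) * V := by
      calc _ ≤ (∑ i, ENNReal.ofReal (q (μ i) - 2 * ε)) * V := by
            gcongr
            refine (ENNReal.ofReal_le_ofReal (Finset.sum_le_sum fun i _ =>
              le_max_left (q (μ i) - 2 * ε) 0)).trans (le_of_eq ?_)
            rw [ENNReal.ofReal_sum_of_nonneg (fun i _ => le_max_right _ _)]
            refine Finset.sum_congr rfl fun i _ => ?_
            rw [ENNReal.ofReal_max, ENNReal.ofReal_zero]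
            exact max_eq_left zero_le
        _ ≤ ∑ i, ∫⁻ u in Metric.ball 0 (R + r), ‖fderiv ℝ G u (μ i)‖ₑ ∂ν := by
            rw [Finset.sum_mul]
            exact Finset.sum_le_sum fun i _ => h1 i
        _ = ∫⁻ u in Metric.ball 0 (R + r), ∑ i, ‖fderiv ℝ G u (μ i)‖ₑ ∂ν := by
            rw [lintegral_finsetSum]
            intro i _
            have : Continuous fun u => ‖fderiv ℝ G u (μ i)‖ₑ := by fun_prop
            exact this.measurable
        _ ≤ ∫⁻ u in Metric.ball 0 (R + r), ENNReal.ofReal B ∂ν := by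
            refine lintegral_mono fun u => ?_
            simp only [← ofReal_norm]
            rw [← ENNReal.ofReal_sum_of_nonneg (fun i _ => norm_nonneg _)]
            exact ENNReal.ofReal_le_ofReal
              (hT _ fun x => fderiv_bound q C hC hq G hG1 hG3 u x)
        _ = ENNReal.ofReal B * ν (Metric.ball 0 (R + r)) := setLIntegral_const _ _
        _ ≤ ENNReal.ofReal B * (2 * V) := by gcongr
        _ = _ := by
            rw [ENNReal.ofReal_mul (by norm_num), ENNReal.ofReal_ofNat]; ring
    have h3 := (ENNReal.mul_le_mul_iff_left hV0 hVt).1 h2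
    exact (ENNReal.ofReal_le_ofReal_iff (by positivity)).1 h3
  refine le_of_forall_pos_le_add fun δ hδ => ?_
  have h := key (δ / (2 * (Fintype.card ι + 1))) (by positivity)
  rw [Finset.sum_sub_distrib, Finset.sum_const, Finset.card_univ, nsmul_eq_mul] at h
  have : (Fintype.card ι : ℝ) * (2 * (δ / (2 * (Fintype.card ι + 1)))) ≤ δ := by
    have e : (Fintype.card ι : ℝ) * (2 * (δ / (2 * (Fintype.card ι + 1)))) =
      δ * (Fintype.card ι / (Fintype.card ι + 1)) := by field_simp
    rw [e]
    have : (Fintype.card ι : ℝ) / (Fintype.card ι + 1) ≤ 1 := by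
      rw [div_le_one (by positivity)]; linarith
    nlinarith
  linarith

end linearization

lemma norm_lin {α : Type*} [Fintype α] (g : α → L1Space) (c : α → ℝ) :
    ‖∑ x, c x • g x‖ =
      ∫ t, |∑ x, c x * g x t| ∂(volume.restrict (Set.Ioo (0:ℝ) 1)) := by
  rw [L1.norm_eq_integral_norm]
  refine integral_congr_ae ?_
  have h1 := Lp.coeFn_fun_finsetSum Finset.univ (fun x => c x • g x)
  have h2 : ∀ᵐ t ∂(volume.restrict (Set.Ioo (0:ℝ) 1)), ∀ x, (c x • g x : L1Space) t = c x * g x t := by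
    rw [ae_all_iff]
    intro x
    filter_upwards [Lp.coeFn_smul (c x) (g x)] with t ht
    simp [ht]
  filter_upwards [h1, h2] with t a1 a2
  rw [a1, Real.norm_eq_abs]
  simp only [a2]

lemma int_lin {α : Type*} [Fintype α] (g : α → L1Space) (c : α → ℝ) :
    Integrable (fun t => |∑ x, c x * g x t|) (volume.restrict (Set.Ioo (0:ℝ) 1)) :=
  (integrable_finsetSum _ fun x _ => (L1.integrable_coeFn (g x)).const_mul (c x)).abs

lemma l1_sobolev {k d n : ℕ} (hd : 2 ≤ d) (hn : 1 ≤ n)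
    (hnb : (d:ℝ)^2 * ((21:ℝ)/20)^d ≤ 5000 * n) (T : (GPt (2^k) d → ℝ) →L[ℝ] L1Space) :
    ∑ j : Fin k, (Fintype.card (GPt (2^(k-(j.1+1))) d × Fin n → GPt (2^(j.1+1)) d) : ℝ)⁻¹ *
      ∑ ω, ‖T (smp (hscale j) n ω)‖ ≤
    2400 / (d * ((2^k : ℕ) : ℝ)^d) * ∑ i, ∑ x : GPt (2^k) d,
      ‖T (Pi.single (Function.update x i (nxt (x i))) 1 - Pi.single x 1)‖ := by
  let g : GPt (2^k) d → L1Space := fun x => T (Pi.single x 1)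
  have hTg : ∀ c : GPt (2^k) d → ℝ, T c = ∑ x, c x • g x := by
    intro c
    conv_lhs => rw [pi_eq_sum_univ' c, map_sum]
    refine Finset.sum_congr rfl fun x _ => ?_
    rw [map_smul]
  have hd1 : ∀ (i : Fin d) (x : GPt (2^k) d) (t : ℝ),
      ∑ y, (Pi.single (Function.update x i (nxt (x i))) 1 - Pi.single x 1 : GPt (2^k) d → ℝ) y
        * g y t = g (Function.update x i (nxt (x i))) t - g x t := by
    intro i x t
    simp [sub_mul, Finset.sum_sub_distrib, Pi.single_apply]
  simp only [hTg, norm_lin]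
  have i1 : ∀ (j : Fin k), Integrable (fun t => (Fintype.card
      (GPt (2^(k-(j.1+1))) d × Fin n → GPt (2^(j.1+1)) d) : ℝ)⁻¹ *
      ∑ ω, |∑ x, smp (hscale j) n ω x * g x t|) (volume.restrict (Set.Ioo (0:ℝ) 1)) := fun j =>
    (integrable_finsetSum _ fun ω _ => int_lin g _).const_mul _
  have i2 : ∀ i : Fin d, Integrable (fun t => ∑ x : GPt (2^k) d, |∑ y,
      (Pi.single (Function.update x i (nxt (x i))) 1 - Pi.single x 1 : GPt (2^k) d → ℝ) y
        * g y t|) (volume.restrict (Set.Ioo (0:ℝ) 1)) := fun i =>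
    integrable_finsetSum _ fun x _ => int_lin g _
  have e1 : ∀ j : Fin k, (Fintype.card
      (GPt (2^(k-(j.1+1))) d × Fin n → GPt (2^(j.1+1)) d) : ℝ)⁻¹ *
      ∑ ω, ∫ t, |∑ x, smp (hscale j) n ω x * g x t| ∂(volume.restrict (Set.Ioo (0:ℝ) 1)) =
      ∫ t, (Fintype.card (GPt (2^(k-(j.1+1))) d × Fin n → GPt (2^(j.1+1)) d) : ℝ)⁻¹ *
      ∑ ω, |∑ x, smp (hscale j) n ω x * g x t| ∂(volume.restrict (Set.Ioo (0:ℝ) 1)) := by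
    intro j
    rw [integral_const_mul, integral_finsetSum _ fun ω _ => int_lin g _]
  have e2 : ∀ i : Fin d, ∑ x : GPt (2^k) d, ∫ t, |∑ y,
      (Pi.single (Function.update x i (nxt (x i))) 1 - Pi.single x 1 : GPt (2^k) d → ℝ) y
        * g y t| ∂(volume.restrict (Set.Ioo (0:ℝ) 1)) = ∫ t, ∑ x : GPt (2^k) d, |∑ y,
      (Pi.single (Function.update x i (nxt (x i))) 1 - Pi.single x 1 : GPt (2^k) d → ℝ) y
        * g y t| ∂(volume.restrict (Set.Ioo (0:ℝ) 1)) := by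
    intro i
    rw [integral_finsetSum _ fun x _ => int_lin g _]
  simp only [e1, e2]
  rw [← integral_finsetSum _ fun j _ => i1 j, ← integral_finsetSum _ fun i _ => i2 i,
    ← integral_const_mul]
  refine integral_mono (integrable_finsetSum _ fun j _ => i1 j)
    ((integrable_finsetSum _ fun i _ => i2 i).const_mul _) fun t => ?_
  have := sobolev hd hn hnb (fun x => g x t)
  unfold Tm gB at this
  simp only [hd1]
  simpa only [mul_comm (g _ t)] using this

lemma sum_sub_mean {α : Type*} [Fintype α] [Nonempty α] (x : α → ℝ) :
    ∑ y, (x y - (∑ z, x z) / Fintype.card α) = 0 := by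
  rw [Finset.sum_sub_distrib, Finset.sum_const, Finset.card_univ, nsmul_eq_mul]
  have : (Fintype.card α : ℝ) ≠ 0 := by exact_mod_cast Fintype.card_ne_zero
  field_simp
  ring

/-- The sample space at scale `j`. -/
abbrev Smpl (k d n : ℕ) (j : Fin k) : Type :=
  GPt (2^(k-(j.1+1))) d × Fin n → GPt (2^(j.1+1)) d

set_option maxHeartbeats 1000000 in
theorem dyadic_bound (k d : ℕ) (hd : 2 ≤ d) (C : ℝ) (hC : 0 ≤ C)
    (F : {μ : GPt (2^k) d → ℝ // ∑ x, μ x = 0} → L1Space)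
    (hF : ∀ μ ν : {μ : GPt (2^k) d → ℝ // ∑ x, μ x = 0},
            tcNormG (2^k) d (μ.1 - ν.1) ≤ ‖F μ - F ν‖ ∧
            ‖F μ - F ν‖ ≤ C * tcNormG (2^k) d (μ.1 - ν.1)) :
    (k:ℝ) * (d / 800) ≤ 2 * (2400 * C) := by
  obtain ⟨hn, hn1, hn2⟩ := card_bound d _ hd rfl
  set n := ⌊((11:ℝ)/10)^d⌋₊ with hndef
  have h2k : 0 < 2^k := by positivity
  haveI : Nonempty (Fin (2^k)) := ⟨⟨0, h2k⟩⟩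
  let P : (GPt (2^k) d → ℝ) → GPt (2^k) d → ℝ := fun x y =>
    x y - (∑ z, x z) / Fintype.card (GPt (2^k) d)
  have hP0 : ∀ x, ∑ y, P x y = 0 := fun x => sum_sub_mean x
  have hPsub : ∀ x y, P (x - y) = P x - P y := by
    intro x y; ext z
    simp only [P, Pi.sub_apply, Finset.sum_sub_distrib]; ring
  have hPsmul : ∀ (t : ℝ) x, P (t • x) = t • P x := by
    intro t x; ext z
    simp only [P, Pi.smul_apply, smul_eq_mul, ← Finset.mul_sum]; ring
  have hPid : ∀ x : GPt (2^k) d → ℝ, ∑ y, x y = 0 → P x = x := by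
    intro x hx; ext z
    simp [P, hx]
  let q : (GPt (2^k) d → ℝ) → ℝ := fun x => tcNormG (2^k) d (P x)
  let H : (GPt (2^k) d → ℝ) → L1Space := fun x => F ⟨P x, hP0 x⟩
  let w : Fin k → ℝ := fun j =>
    (Fintype.card (GPt (2^(k-(j.1+1))) d × Fin n → GPt (2^(j.1+1)) d) : ℝ)⁻¹
  have hw : ∀ j, 0 < w j := by
    intro j
    have : 0 < 2^(j.1+1) := by positivity
    haveI : Nonempty (Fin (2^(j.1+1))) := ⟨⟨0, this⟩⟩
    have : 0 < Fintype.card (GPt (2^(k-(j.1+1))) d × Fin n → GPt (2^(j.1+1)) d) :=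
      Fintype.card_pos
    exact inv_pos.2 (by exact_mod_cast this)
  have hwc : ∀ j, (Fintype.card (Smpl k d n j) : ℝ) * w j = 1 := fun j =>
    mul_inv_cancel₀ (inv_pos.1 (hw j)).ne'
  let μ : (Σ j, Smpl k d n j) → (GPt (2^k) d → ℝ) := fun p => w p.1 • smp (hscale p.1) n p.2
  have hs0 : ∀ (j : Fin k) (ω : Smpl k d n j), ∑ x, smp (hscale j) n ω x = 0 :=
    fun j ω => smp_sum_zero (hscale j) h2k n hn ω
  have hqlow : ∀ p, w p.1 * (d / 800) ≤ q (μ p) := by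
    rintro ⟨j, ω⟩
    have z : ∑ x, (w j • smp (hscale j) n ω) x = 0 := by
      simp only [Pi.smul_apply, smul_eq_mul, ← Finset.mul_sum]
      rw [hs0 j ω, mul_zero]
    have a1 : (d:ℝ) / 800 ≤ tcNormG (2^k) d (smp (hscale j) n ω) :=
      tc_smp (hscale j) h2k (by
        calc 2 = 2^1 := rfl
          _ ≤ 2^(j.1+1) := Nat.pow_le_pow_right (by norm_num) (by omega)) hd hn hn1 ω
    have a2 := tc_smul_le (w j)⁻¹ (w j • smp (hscale j) n ω) z
    rw [smul_smul, inv_mul_cancel₀ (hw j).ne', one_smul, abs_of_pos (inv_pos.2 (hw j))] at a2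
    have a3 : q (μ ⟨j, ω⟩) = tcNormG (2^k) d (w j • smp (hscale j) n ω) := by
      simp only [q, μ]
      rw [hPid _ z]
    rw [a3]
    have a4 := a1.trans a2
    rw [le_inv_mul_iff₀ (hw j)] at a4
    exact a4
  have hlow : (k:ℝ) * (d / 800) ≤ ∑ p, q (μ p) := by
    refine le_trans (le_of_eq ?_) (Finset.sum_le_sum fun p _ => hqlow p)
    rw [Fintype.sum_sigma]
    simp only [Finset.sum_const, Finset.card_univ, nsmul_eq_mul, ← mul_assoc, hwc, one_mul]
    simp
  refine hlow.trans ?_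
  have hqL : ∀ x, q x ≤ (d * (2^k : ℕ) * (Fintype.card (GPt (2^k) d) * 2) + 1) * ‖x‖ := by
    intro x
    refine (tc_le_norm _ (hP0 x)).trans ?_
    have b1 : ∀ y, |P x y| ≤ 2 * ‖x‖ := by
      intro y
      have c1 : ∀ z, |x z| ≤ ‖x‖ := fun z => norm_le_pi_norm x z
      have c2 : |(∑ z, x z) / Fintype.card (GPt (2^k) d)| ≤ ‖x‖ := by
        have hc : (0:ℝ) < Fintype.card (GPt (2^k) d) := by exact_mod_cast Fintype.card_pos
        rw [abs_div, abs_of_pos hc, div_le_iff₀ hc]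
        refine (Finset.abs_sum_le_sum_abs _ _).trans ?_
        refine (Finset.sum_le_sum fun z _ => c1 z).trans (le_of_eq ?_)
        rw [Finset.sum_const, Finset.card_univ, nsmul_eq_mul, mul_comm]
      refine (abs_sub _ _).trans ?_
      linarith [c1 y]
    have b2 : ∑ y, |P x y| ≤ Fintype.card (GPt (2^k) d) * (2 * ‖x‖) := by
      refine (Finset.sum_le_sum fun y _ => b1 y).trans (le_of_eq ?_)
      rw [Finset.sum_const, Finset.card_univ, nsmul_eq_mul]
    have b3 := mul_le_mul_of_nonneg_left b2 (show (0:ℝ) ≤ d * (2^k : ℕ) by positivity)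
    nlinarith [norm_nonneg x]
  refine linearize (volume : Measure (GPt (2^k) d → ℝ)) q _ C (2400 * C) (by positivity) hC
    (by positivity) hqL ?_ H ?_ ?_ μ ?_
  · intro t x
    simp only [q, hPsmul]
    exact tc_smul_le _ _ (hP0 x)
  · intro x y
    have h := (hF ⟨P x, hP0 x⟩ ⟨P y, hP0 y⟩).1
    rw [← hPsub] at h
    exact h
  · intro x y
    have h := (hF ⟨P x, hP0 x⟩ ⟨P y, hP0 y⟩).2
    rw [← hPsub] at h
    exact h
  · intro T hT
    rw [Fintype.sum_sigma]
    have s1 := l1_sobolev hd hn hn2 T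
    calc _ = ∑ j : Fin k, w j * ∑ ω : Smpl k d n j, ‖T (smp (hscale j) n ω)‖ := by
          refine Finset.sum_congr rfl fun j _ => ?_
          rw [Finset.mul_sum]
          refine Finset.sum_congr rfl fun ω _ => ?_
          simp only [μ]
          rw [map_smul, norm_smul, Real.norm_of_nonneg (hw j).le]
      _ ≤ _ := s1
      _ ≤ 2400 / (d * ((2^k : ℕ) : ℝ)^d) * ∑ i : Fin d, ∑ x : GPt (2^k) d, C := by
          refine mul_le_mul_of_nonneg_left ?_ (by positivity)
          refine Finset.sum_le_sum fun i _ => Finset.sum_le_sum fun x _ => ?_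
          refine (hT _).trans ?_
          have z : ∑ y, (Pi.single (Function.update x i (nxt (x i))) 1 - Pi.single x 1
              : GPt (2^k) d → ℝ) y = 0 := by
            simp [Finset.sum_sub_distrib, Pi.single_apply]
          have u : q (Pi.single (Function.update x i (nxt (x i))) 1 - Pi.single x 1) ≤ 1 := by
            simp only [q]
            rw [hPid _ z]
            exact (tc_single _ _).trans (gd_nxt x i)
          exact (mul_le_mul_of_nonneg_left u hC).trans (mul_one C).le
      _ = 2400 * C := by
          simp only [Finset.sum_const, Finset.card_univ, nsmul_eq_mul, Fintype.card_pi,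
            Fintype.card_fin, Finset.prod_const]
          have : (0:ℝ) < d := by positivity
          push_cast
          field_simp

/-- Inclusion of a smaller grid. -/
def inc {a m d : ℕ} (h : a ≤ m) (x : GPt a d) : GPt m d := fun i => Fin.castLE h (x i)

/-- Clamping retraction onto a smaller grid. -/
def clamp {a m d : ℕ} (ha : 0 < a) (y : GPt m d) : GPt a d :=
  fun i => ⟨min (y i : ℕ) (a - 1), by omega⟩

/-- Push-forward of a measure under the inclusion. -/
def push {a m d : ℕ} (h : a ≤ m) (μ : GPt a d → ℝ) : GPt m d → ℝ :=
  fun y => ∑ x, if inc h x = y then μ x else 0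

lemma gd_inc {a m d : ℕ} (h : a ≤ m) (u v : GPt a d) : gdistM (inc h u) (inc h v) = gdistM u v :=
  rfl

lemma clamp_inc {a m d : ℕ} (h : a ≤ m) (ha : 0 < a) (x : GPt a d) :
    clamp ha (inc h x) = x := by
  funext i
  apply Fin.ext
  have := (x i).2
  simp only [clamp, inc, Fin.val_castLE]
  omega

lemma gd_clamp {a m d : ℕ} (ha : 0 < a) (u v : GPt m d) :
    gdistM (clamp ha u) (clamp ha v) ≤ gdistM u v := by
  unfold gdistM
  refine Finset.sum_le_sum fun i _ => ?_
  simp only [clamp]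
  push_cast
  exact (abs_min_sub_min_le_max _ _ _ _).trans (by simp)

lemma push_pair {a m d : ℕ} (h : a ≤ m) (μ : GPt a d → ℝ) (f : GPt m d → ℝ) :
    ∑ y, f y * push h μ y = ∑ x, f (inc h x) * μ x := by
  simp only [push, Finset.mul_sum]
  rw [Finset.sum_comm]
  refine Finset.sum_congr rfl fun x _ => ?_
  simp

lemma push_zero {a m d : ℕ} (h : a ≤ m) (μ : GPt a d → ℝ) (hμ : ∑ x, μ x = 0) :
    ∑ y, push h μ y = 0 := by
  have := push_pair h μ (fun _ => 1)
  simpa [hμ] using this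

lemma push_sub {a m d : ℕ} (h : a ≤ m) (μ ν : GPt a d → ℝ) :
    push h (μ - ν) = push h μ - push h ν := by
  funext y
  simp only [push, Pi.sub_apply]
  rw [← Finset.sum_sub_distrib]
  refine Finset.sum_congr rfl fun x _ => ?_
  split_ifs <;> simp

lemma tc_push {a m d : ℕ} (h : a ≤ m) (ha : 0 < a) (μ : GPt a d → ℝ) (hμ : ∑ x, μ x = 0) :
    tcNormG m d (push h μ) = tcNormG a d μ := by
  refine le_antisymm (tc_le _ _ fun f hf => ?_) (tc_le _ _ fun f hf => ?_)
  · rw [push_pair]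
    exact le_tc μ hμ (fun x => f (inc h x)) fun u v => hf _ _
  · have := le_tc (push h μ) (push_zero h μ hμ) (fun y => f (clamp ha y))
      fun u v => (hf _ _).trans (gd_clamp ha u v)
    rw [push_pair] at this
    simpa only [clamp_inc] using this

/-- Any embedding of `TC({1,…,m}^d)` into `L_1` with bi-Lipschitz distortion at most `C`
satisfies `C ≥ c·d·log m` for a universal constant `c > 0`. -/
theorem tc_grid_L1_distortion_lower_bound :
    ∃ c : ℝ, 0 < c ∧ ∀ (m d : ℕ), 2 ≤ m → 2 ≤ d → ∀ C : ℝ, 1 ≤ C →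
      ∀ F : {μ : GPt m d → ℝ // ∑ x, μ x = 0} → L1Space,
        (∀ μ ν : {μ : GPt m d → ℝ // ∑ x, μ x = 0},
            tcNormG m d (μ.1 - ν.1) ≤ ‖F μ - F ν‖ ∧
            ‖F μ - F ν‖ ≤ C * tcNormG m d (μ.1 - ν.1)) →
        c * d * Real.log m ≤ C := by
  refine ⟨1 / 8000000, by norm_num, ?_⟩
  intro m d hm hd C hC F hF
  set k := Nat.log 2 m with hk
  have hkm : 2^k ≤ m := Nat.pow_log_le_self 2 (by omega)
  have hk1 : 1 ≤ k := Nat.log_pos (by norm_num) hm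
  have h2k : 0 < 2^k := by positivity
  have key := dyadic_bound k d hd C (by linarith)
    (fun μ => F ⟨push hkm μ.1, push_zero hkm μ.1 μ.2⟩) (by
      intro μ ν
      have h0 : ∑ x, (μ.1 - ν.1) x = 0 := by
        simp only [Pi.sub_apply, Finset.sum_sub_distrib, μ.2, ν.2, sub_zero]
      have h := hF ⟨push hkm μ.1, push_zero hkm μ.1 μ.2⟩ ⟨push hkm ν.1, push_zero hkm ν.1 ν.2⟩
      rw [← tc_push hkm h2k _ h0, push_sub]
      exact h)
  have hlt : m < 2^(k+1) := Nat.lt_pow_succ_log_self (by norm_num) m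
  have hlog : Real.log m ≤ 2 * k := by
    have h1 : Real.log m ≤ Real.log ((2:ℝ)^(k+1)) :=
      Real.log_le_log (by positivity) (by exact_mod_cast hlt.le)
    rw [Real.log_pow] at h1
    have h2 : Real.log 2 ≤ 1 := by
      have := Real.log_le_sub_one_of_pos (show (0:ℝ) < 2 by norm_num)
      linarith
    have h3 : (1:ℝ) ≤ k := by exact_mod_cast hk1
    push_cast at h1
    nlinarith
  have hd0 : (0:ℝ) ≤ d := by positivity
  have h4 : d * Real.log m ≤ d * (2 * k) := mul_le_mul_of_nonneg_left hlog hd0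
  linarith
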